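/- arXiv:2504.15775 — 6 statements merged into one kernel-verified Lean document; each statement's English description precedes it below -/
import Mathlib

section
/- Let R be a commutative ring in which every maximal ideal is finitely generated. Then R is an almost V-ring if and only if R is a quasi V-ring and the socle of R (the sum of all minimal ideals of R) is an almost injective R-module. -/
universe u v w v'

section LeftDefs
variable (R : Type u) [Ring R]

/-- A (left) `R`-module `M` is mininjective if every homomorphism from a minimal (left)
ideal `I` of `R` into `M` extends to a homomorphism `R → M`. -/
def IsMininjectiveLeft (M : Type v) [AddCommGroup M] [Module R M] : Prop :=
  ∀ I : Submodule R R, IsAtom I → ∀ f : ↥I →ₗ[R] M,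
    ∃ g : R →ₗ[R] M, ∀ x : ↥I, g ↑x = f x

/-- A (left) `R`-module `M` is min-projective if every short exact sequence
`0 → N → X → M → 0` with `N` mininjective splits (equivalently `Ext¹(M, N) = 0` for
every mininjective `N`). -/
def IsMinProjectiveLeft (M : Type v) [AddCommGroup M] [Module R M] : Prop :=
  ∀ (X : Type (max u v)) [AddCommGroup X] [Module R X] (p : X →ₗ[R] M),
    Function.Surjective p → IsMininjectiveLeft R ↥(LinearMap.ker p) →
      ∃ s : M →ₗ[R] X, p ∘ₗ s = LinearMap.id

/-- `R` is strongly min-coherent if every minimal (left) ideal of `R` is min-projective. -/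
def StronglyMinCoherentLeft : Prop :=
  ∀ I : Submodule R R, IsAtom I → IsMinProjectiveLeft R ↥I

/-- `R` is a quasi V-ring if every simple `R`-module which is not isomorphic to
any ideal of `R` is injective. -/
def QuasiVRingLeft : Prop :=
  ∀ (S : Type v) [AddCommGroup S] [Module R S], IsSimpleModule R S →
    (¬ ∃ I : Submodule R R, Nonempty (S ≃ₗ[R] ↥I)) → Module.Injective R S

/-- `R` is a Kasch ring if every simple `R`-module is isomorphic to an ideal of `R`. -/
def KaschLeft : Prop :=
  ∀ (S : Type v) [AddCommGroup S] [Module R S], IsSimpleModule R S →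
    ∃ I : Submodule R R, Nonempty (S ≃ₗ[R] ↥I)

/-- An `R`-module `M` is almost injective if for every monomorphism `i : A → B` and every
`f : A → M`, either `f` extends to `B`, or there are a nonzero direct summand `D` of `B`
(with projection `π : B → D`) and `h : M → D` with `h ∘ f = π ∘ i`. -/
def IsAlmostInjectiveLeft (M : Type v) [AddCommGroup M] [Module R M] : Prop :=
  ∀ (A B : Type w) [AddCommGroup A] [AddCommGroup B] [Module R A] [Module R B]
    (i : A →ₗ[R] B), Function.Injective i → ∀ f : A →ₗ[R] M,
    (∃ g : B →ₗ[R] M, g ∘ₗ i = f) ∨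
    (∃ D : Submodule R B, D ≠ ⊥ ∧ ∃ π : B →ₗ[R] ↥D,
      π ∘ₗ D.subtype = LinearMap.id ∧ ∃ h : M →ₗ[R] ↥D, h ∘ₗ f = π ∘ₗ i)

/-- `R` is an almost V-ring if every simple `R`-module is almost injective. -/
def AlmostVRingLeft : Prop :=
  ∀ (S : Type v) [AddCommGroup S] [Module R S], IsSimpleModule R S →
    IsAlmostInjectiveLeft.{u, v, w} R S

end LeftDefs

theorem IsAlmostInjectiveLeft.of_retract {R : Type u} [Ring R] {M N : Type v} [AddCommGroup M]
    [Module R M] [AddCommGroup N] [Module R N] (hM : IsAlmostInjectiveLeft.{u, v, w} R M)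
    (s : N →ₗ[R] M) (p : M →ₗ[R] N) (hps : p ∘ₗ s = LinearMap.id) :
    IsAlmostInjectiveLeft.{u, v, w} R N := by
  intro A B _ _ _ _ i hi f
  rcases hM A B i hi (s ∘ₗ f) with ⟨g, hg⟩ | ⟨D, hD, π, hπ, h, hh⟩
  · refine Or.inl ⟨p ∘ₗ g, ?_⟩
    rw [LinearMap.comp_assoc, hg, ← LinearMap.comp_assoc, hps, LinearMap.id_comp]
  · exact Or.inr ⟨D, hD, π, hπ, h ∘ₗ s, by rw [LinearMap.comp_assoc, hh]⟩

theorem IsAlmostInjectiveLeft.pi_family {R : Type u} [Ring R] {ι : Type} {M : ι → Type v}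
    [∀ j, AddCommGroup (M j)] [∀ j, Module R (M j)]
    (hM : ∀ j, IsAlmostInjectiveLeft.{u, v, w} R (M j)) :
    IsAlmostInjectiveLeft.{u, v, w} R (∀ j, M j) := by
  intro A B _ _ _ _ i hi f
  by_cases H : ∀ j, ∃ g : B →ₗ[R] M j, g ∘ₗ i = LinearMap.proj j ∘ₗ f
  · choose g hg using H
    refine Or.inl ⟨LinearMap.pi g, ?_⟩
    ext a j
    exact LinearMap.congr_fun (hg j) a
  · push Not at H
    obtain ⟨j, hj⟩ := H
    rcases hM j A B i hi (LinearMap.proj j ∘ₗ f) with ⟨g, hg⟩ | ⟨D, hD, π, hπ, h, hh⟩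
    · exact absurd hg (hj g)
    · exact Or.inr ⟨D, hD, π, hπ, h ∘ₗ LinearMap.proj j, by rw [LinearMap.comp_assoc, hh]⟩

/-- A map to an almost injective module that does not extend to `R` gives an idempotent. -/
theorem IsAlmostInjectiveLeft.exists_idem {R : Type u} [CommRing R] {S A : Type u} [AddCommGroup S]
    [Module R S] [AddCommGroup A] [Module R A] (hS : IsAlmostInjectiveLeft.{u, u, u} R S)
    (i : A →ₗ[R] R) (hi : Function.Injective i) (f : A →ₗ[R] S)
    (hf : ¬ ∃ g : R →ₗ[R] S, g ∘ₗ i = f) :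
    ∃ (e : R) (h : S →ₗ[R] R), e * e = e ∧ (∀ a, h (f a) = i a * e) ∧ ∃ a, h (f a) ≠ 0 := by
  obtain ⟨C, hC⟩ := zorn_le₀ {C : Submodule R R | Disjoint (LinearMap.range i) C} (by
    intro c hc hch
    exact ⟨sSup c, (DirectedOn.disjoint_sSup_right hch.directedOn).2 fun b hb => hc hb,
      fun z hz => le_sSup hz⟩)
  have hd : Disjoint (LinearMap.range i) C := hC.1
  have hinj : Function.Injective (i.coprod C.subtype) := by
    rw [← LinearMap.ker_eq_bot, LinearMap.ker_eq_bot']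
    rintro ⟨a, c⟩ hac
    simp only [LinearMap.coprod_apply, Submodule.subtype_apply] at hac
    have h1 : i a = -(c : R) := eq_neg_of_add_eq_zero_left hac
    have h2 : i a = 0 := Submodule.disjoint_def.1 hd _ ⟨a, rfl⟩ (h1 ▸ C.neg_mem c.2)
    have h3 : a = 0 := hi (by simpa using h2)
    have h4 : c = 0 := by
      ext
      rw [h2, zero_add] at hac
      simpa using hac
    rw [h3, h4]; rfl
  rcases hS _ _ (i.coprod C.subtype) hinj (f ∘ₗ LinearMap.fst R A C) with
    ⟨g, hg⟩ | ⟨D, hD, π, hπ, h, hh⟩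
  · refine absurd ⟨g, ?_⟩ hf
    ext a
    simpa using LinearMap.congr_fun hg (a, 0)
  have hπe : ∀ r, (π r : R) = r * (π 1 : R) := by
    intro r
    have : π r = r • π 1 := by rw [← map_smul, smul_eq_mul, mul_one]
    rw [this]; rfl
  have hπD : ∀ d : D, (d : R) = d * (π 1 : R) := by
    intro d
    rw [← hπe]
    exact congrArg Subtype.val (LinearMap.congr_fun hπ d).symm
  set e : R := (π 1 : R) with he
  have hee : e = e * e := hπD (π 1)
  have hmul : ∀ (a : A) (c : C), ((h (f a) : D) : R) = (i a + c) * e := by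
    intro a c
    rw [← hπe]
    exact congrArg Subtype.val (LinearMap.congr_fun hh (a, c))
  have hmulA : ∀ (a : A), ((h (f a) : D) : R) = i a * e := by
    intro a
    simpa using hmul a 0
  have hmulC : ∀ c : C, (c : R) * e = 0 := by
    intro c
    simpa using (hmul 0 c).symm
  refine ⟨e, D.subtype ∘ₗ h, hee.symm, hmulA, ?_⟩
  by_contra! H
  have H' : ∀ a, i a * e = 0 := fun a => by rw [← hmulA]; exact H a
  have hle : C ⊔ Submodule.span R {e} ≤ C := by
    refine hC.2 ?_ le_sup_left
    refine Submodule.disjoint_def.2 ?_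
    rintro _ ⟨a, rfl⟩ hx
    obtain ⟨c, hc, y, hy, hxy⟩ := Submodule.mem_sup.1 hx
    obtain ⟨r, rfl⟩ := Submodule.mem_span_singleton.1 hy
    have h1 : r * e = 0 := by
      have h2 : (c + r * e) * e = 0 := by rw [← H' a, ← hxy]; rfl
      have h3 := hmulC ⟨c, hc⟩
      simp only at h3
      rw [add_mul, h3, zero_add, mul_assoc, ← hee] at h2
      exact h2
    rw [smul_eq_mul, h1, add_zero] at hxy
    exact Submodule.disjoint_def.1 hd _ ⟨a, rfl⟩ (hxy ▸ hc)
  have heC : e ∈ C := hle (Submodule.mem_sup_right (Submodule.mem_span_singleton_self e))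
  have he0 : e = 0 := by rw [hee]; exact hmulC ⟨e, heC⟩
  apply hD
  rw [eq_bot_iff]
  intro d hd'
  have := hπD ⟨d, hd'⟩
  simp only [he0, mul_zero] at this
  simpa using this

theorem IsAlmostInjectiveLeft.exists_mul_sq {R : Type u} [CommRing R] (m : Ideal R)
    (hm : m.IsMaximal) (hS : IsAlmostInjectiveLeft.{u, u, u} R (R ⧸ m)) (x : R) (hx : x ∈ m) :
    ∃ s, s ∉ m ∧ s * (x * x) = 0 := by
  by_cases hann : ∃ s, s ∉ m ∧ s * x = 0
  · obtain ⟨s, h1, h2⟩ := hann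
    exact ⟨s, h1, by rw [← mul_assoc, h2, zero_mul]⟩
  push Not at hann
  let μ : R →ₗ[R] R := LinearMap.toSpanSingleton R R x
  have hker : LinearMap.ker μ ≤ LinearMap.ker (Submodule.mkQ m) := by
    intro r hr
    rw [Submodule.ker_mkQ]
    by_contra hrm
    exact hann r hrm (by simpa [μ] using hr)
  let i : (R ⧸ LinearMap.ker μ) →ₗ[R] R := (LinearMap.ker μ).liftQ μ le_rfl
  have hi : Function.Injective i := by
    rw [← LinearMap.ker_eq_bot]
    exact Submodule.ker_liftQ_eq_bot _ _ _ le_rfl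
  let f : (R ⧸ LinearMap.ker μ) →ₗ[R] (R ⧸ m) := (LinearMap.ker μ).liftQ (Submodule.mkQ m) hker
  have hi' : ∀ r, i (Submodule.Quotient.mk r) = r * x := fun r => rfl
  have hf' : ∀ r, f (Submodule.Quotient.mk r) = Submodule.Quotient.mk r := fun r => rfl
  have kill : ∀ (r : R) (y : R ⧸ m), r ∈ m → r • y = 0 := by
    intro r y hr
    obtain ⟨y, rfl⟩ := Submodule.Quotient.mk_surjective m y
    rw [← Submodule.Quotient.mk_smul, Submodule.Quotient.mk_eq_zero]
    exact m.mul_mem_right y hr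
  obtain ⟨e, h, hee, hh, a, ha⟩ := hS.exists_idem i hi f (by
    rintro ⟨g, hg⟩
    have h1 := LinearMap.congr_fun hg (Submodule.Quotient.mk 1)
    rw [LinearMap.comp_apply, hi', hf', one_mul] at h1
    have h2 : g x = 0 := by
      have : g x = x • g 1 := by rw [← map_smul, smul_eq_mul, mul_one]
      rw [this, kill x _ hx]
    rw [h2] at h1
    exact hm.ne_top ((Ideal.eq_top_iff_one m).2 ((Submodule.Quotient.mk_eq_zero m).1 h1.symm)))
  refine ⟨e, ?_, ?_⟩
  · intro hem
    apply ha
    have h1 : h (f a) = e • h (f a) := by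
      rw [hh, smul_eq_mul, mul_left_comm, hee]
    rw [h1, ← map_smul, kill e _ hem, map_zero]
  · have h1 := hh (x • Submodule.Quotient.mk 1)
    rw [map_smul, kill x _ hx, map_zero, map_smul, hi'] at h1
    rw [mul_comm, h1]
    simp

theorem AlmostVRingLeft.isNoetherianRing {R : Type u} [CommRing R]
    (hN : ∀ I : Ideal R, I.IsMaximal → I.FG) (hR : AlmostVRingLeft.{u, u, u} R) :
    IsNoetherianRing R := by
  refine IsNoetherianRing.of_prime fun p hp => ?_
  obtain ⟨m, hm, hpm⟩ := Ideal.exists_le_maximal p hp.ne_top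
  have : p = m := by
    refine le_antisymm hpm fun x hx => ?_
    have hs : IsSimpleModule R (R ⧸ m) :=
      isSimpleModule_iff_quot_maximal.2 ⟨m, hm, ⟨LinearEquiv.refl R _⟩⟩
    obtain ⟨s, hs, h0⟩ := (hR (R ⧸ m) hs).exists_mul_sq m hm x hx
    rcases hp.mem_or_mem (h0 ▸ p.zero_mem : s * (x * x) ∈ p) with h | h
    · exact absurd (hpm h) hs
    · exact (hp.mem_or_mem h).elim id id
  rw [this]
  exact hN m hm

theorem AlmostVRingLeft.quasiVRing {R : Type u} [CommRing R]
    (hR : AlmostVRingLeft.{u, u, u} R) : QuasiVRingLeft.{u, u} R := by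
  intro S _ _ hS hne
  apply Module.Baer.injective
  intro I f
  by_contra H
  obtain ⟨e, h, -, -, a, ha⟩ := (hR S hS).exists_idem I.subtype I.injective_subtype f (by
    rintro ⟨g, hg⟩
    exact H ⟨g, fun x hx => LinearMap.congr_fun hg ⟨x, hx⟩⟩)
  have hinj : Function.Injective h := by
    refine LinearMap.injective_of_ne_zero ?_
    rintro rfl
    exact ha rfl
  exact hne ⟨LinearMap.range h, ⟨LinearEquiv.ofInjective h hinj⟩⟩

theorem isSemisimpleModule_sSup_atoms (R : Type u) [Ring R] :
    IsSemisimpleModule R ↥(sSup {I : Submodule R R | IsAtom I}) := by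
  rw [sSup_eq_iSup]
  refine isSemisimpleModule_biSup_of_isSemisimpleModule_submodule fun I hI => ?_
  have : IsSimpleModule R I := isSimpleModule_iff_isAtom.2 hI
  infer_instance

/-- For a commutative ring `R` in which every maximal ideal is finitely
generated, `R` is an almost V-ring iff `R` is a quasi V-ring and the socle of `R` is
almost injective. -/
theorem almostVRing_iff_quasiVRing_and_socle_almostInjective (R : Type u) [CommRing R]
    (hN : ∀ I : Ideal R, I.IsMaximal → I.FG) :
    AlmostVRingLeft.{u, u, u} R ↔
      (QuasiVRingLeft.{u, u} R ∧
        IsAlmostInjectiveLeft.{u, u, u} R ↥(sSup {I : Submodule R R | IsAtom I})) := by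
  have hss := isSemisimpleModule_sSup_atoms R
  constructor
  · intro hR
    refine ⟨hR.quasiVRing, ?_⟩
    have := hR.isNoetherianRing hN
    obtain ⟨n, S, e, hS⟩ := IsSemisimpleModule.exists_linearEquiv_fin_dfinsupp R
      ↥(sSup {I : Submodule R R | IsAtom I})
    let e' := e.trans (DFinsupp.linearEquivFunOnFintype (R := R) (M := fun i => S i))
    refine (IsAlmostInjectiveLeft.pi_family fun j => hR (S j) (hS j)).of_retract
      e'.toLinearMap e'.symm.toLinearMap ?_
    ext x
    simp
  · rintro ⟨hQ, hM⟩ S _ _ hS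
    by_cases hI : ∃ I : Submodule R R, Nonempty (S ≃ₗ[R] ↥I)
    · obtain ⟨I, ⟨e⟩⟩ := hI
      have hIs : IsSimpleModule R I := IsSimpleModule.congr e.symm
      have hle : I ≤ sSup {I : Submodule R R | IsAtom I} :=
        le_sSup (isSimpleModule_iff_isAtom.1 hIs)
      obtain ⟨p, hp⟩ := IsSemisimpleModule.extension_property
        (Submodule.inclusion hle ∘ₗ e.toLinearMap)
        ((Submodule.inclusion_injective hle).comp e.injective) (LinearMap.id : S →ₗ[R] S)
      exact hM.of_retract _ p hp
    · have := hQ S hS hI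
      intro A B _ _ _ _ i hi f
      obtain ⟨g, hg⟩ := Module.Injective.out i hi f
      exact Or.inl ⟨g, LinearMap.ext hg⟩
end

section
/- Let R be a commutative ring in which every maximal ideal is finitely generated. Then R is an almost V-ring if and only if R is a quasi-Frobenius serial ring with J(R)² = 0, where J(R) is the Jacobson radical of R. -/
universe u v w v'

open IsLocalRing in
/-- Key local step: for an almost V-ring whose maximal ideal `m` is finitely generated, the maximal
ideal of the localization at `m` squares to zero and is generated by any nonzero element. -/
theorem avr_local (R : Type u) [CommRing R] (hV : AlmostVRingLeft.{u, u, u} R)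
    (m : Ideal R) [hm : m.IsMaximal] (hfg : m.FG) :
    ∀ x ∈ maximalIdeal (Localization.AtPrime m), ∀ y ∈ maximalIdeal (Localization.AtPrime m),
      x * y = 0 ∧ (x ≠ 0 → ∃ l, y = l * x) := by
  let L := Localization.AtPrime m
  change ∀ x ∈ maximalIdeal L, ∀ y ∈ maximalIdeal L, x * y = 0 ∧ (x ≠ 0 → ∃ l, y = l * x)
  by_cases hbot : maximalIdeal L = ⊥
  · intro x hx y hy
    rw [hbot, Ideal.mem_bot] at hx hy
    simp [hx]
  have hMfg : (maximalIdeal L).FG := by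
    rw [← Localization.AtPrime.map_eq_maximalIdeal]
    exact hfg.map _
  have : Module.Finite L (maximalIdeal L) := Module.Finite.iff_fg.mpr hMfg
  have : Nontrivial (maximalIdeal L) := Submodule.nontrivial_iff_ne_bot.mpr hbot
  obtain ⟨N, hN, -⟩ := (eq_top_or_exists_le_coatom (⊥ : Submodule L (maximalIdeal L))).resolve_left
    bot_ne_top
  have : IsSimpleModule L (maximalIdeal L ⧸ N) := isSimpleModule_iff_isCoatom.mpr hN
  obtain ⟨I, hI, ⟨e⟩⟩ := isSimpleModule_iff_quot_maximal.mp this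
  obtain rfl : I = maximalIdeal L := IsLocalRing.eq_maximalIdeal hI
  let f : maximalIdeal L →ₗ[L] (L ⧸ maximalIdeal L) := e.toLinearMap ∘ₗ N.mkQ
  have hfsurj : Function.Surjective f := e.surjective.comp N.mkQ_surjective
  have hkill : ∀ x ∈ maximalIdeal L, ∀ z : L ⧸ maximalIdeal L, x • z = 0 := by
    intro x hx z
    obtain ⟨z, rfl⟩ := Ideal.Quotient.mk_surjective z
    rw [Algebra.smul_def]
    change Ideal.Quotient.mk _ x * _ = 0
    rw [Ideal.Quotient.eq_zero_iff_mem.mpr hx, zero_mul]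
  have hsurjR : Function.Surjective (algebraMap R (L ⧸ maximalIdeal L)) :=
    Ideal.algebraMap_residueField_surjective m
  have hSL : IsSimpleModule L (L ⧸ maximalIdeal L) :=
    isSimpleModule_iff_isCoatom.mpr (Ideal.isMaximal_def.mp inferInstance)
  have hS : IsSimpleModule R (L ⧸ maximalIdeal L) := by
    have : Nontrivial (L ⧸ maximalIdeal L) := hSL.nontrivial
    rw [isSimpleModule_iff_toSpanSingleton_surjective]
    refine ⟨inferInstance, fun z hz w => ?_⟩
    obtain ⟨l, hl⟩ := (isSimpleModule_iff_toSpanSingleton_surjective.mp hSL).2 z hz w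
    obtain ⟨r, hr⟩ := hsurjR (Ideal.Quotient.mk _ l)
    refine ⟨r, ?_⟩
    rw [← hl]
    simp only [LinearMap.toSpanSingleton_apply]
    rw [Algebra.smul_def, hr, Algebra.smul_def]
    rfl
  have hinj : Function.Injective f := by
    rcases hV (L ⧸ maximalIdeal L) hS (maximalIdeal L) L
      ((maximalIdeal L).subtype.restrictScalars R) (Submodule.subtype_injective _)
      (f.restrictScalars R) with ⟨g, hg⟩ | ⟨D, hD, π, hπ, h, hh⟩
    · exfalso
      let g' := g.extendScalarsOfIsLocalization m.primeCompl L
      have hz : ∀ x, f x = 0 := by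
        intro x
        have h1 : g' (x : L) = f x := LinearMap.congr_fun hg x
        rw [← h1, ← mul_one (x : L), ← smul_eq_mul, map_smul]
        exact hkill _ x.2 _
      have : Nontrivial (L ⧸ maximalIdeal L) := hSL.nontrivial
      obtain ⟨z, hz0⟩ := exists_ne (0 : L ⧸ maximalIdeal L)
      obtain ⟨x, rfl⟩ := hfsurj z
      exact hz0 (hz x)
    · let p := (D.subtype ∘ₗ π).extendScalarsOfIsLocalization m.primeCompl L
      have hp : ∀ x, p x = x * p 1 := by
        intro x
        conv_lhs => rw [← mul_one x, ← smul_eq_mul, map_smul, smul_eq_mul]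
      have hpD : ∀ d ∈ D, p d = d := by
        intro d hd
        exact congrArg Subtype.val (LinearMap.congr_fun hπ ⟨d, hd⟩)
      have hpm : ∀ x, p x ∈ D := fun x => (π x).2
      have hidem : p 1 * (1 - p 1) = 0 := by
        have := hpD _ (hpm 1)
        rw [hp] at this
        rw [mul_sub, mul_one, this, sub_self]
      have hp0 : p 1 ≠ 0 := by
        intro h0
        apply hD
        rw [eq_bot_iff]
        intro d hd
        rw [Submodule.mem_bot, ← hpD d hd, hp, h0, mul_zero]
      have hp1 : p 1 = 1 := by
        rcases IsLocalRing.isUnit_or_isUnit_one_sub_self (p 1) with hu | hu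
        · have := (hu.mul_right_eq_zero).mp hidem
          exact (sub_eq_zero.mp this).symm
        · exact absurd ((hu.mul_left_eq_zero).mp hidem) hp0
      intro x y hxy
      have h1 : ∀ x : maximalIdeal L, p (x : L) = (h (f x) : L) := fun x =>
        (congrArg Subtype.val (LinearMap.congr_fun hh x)).symm
      apply Subtype.ext
      have h2 := h1 x
      rw [hxy, ← h1 y, hp, hp y, hp1, mul_one, mul_one] at h2
      exact h2
  intro x hx y hy
  constructor
  · have : f (x • ⟨y, hy⟩) = 0 := by rw [map_smul]; exact hkill x hx _
    have := hinj (this.trans (map_zero f).symm)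
    exact congrArg Subtype.val this
  · intro hx0
    have hfx : f ⟨x, hx⟩ ≠ 0 := by
      intro h0
      exact hx0 (congrArg Subtype.val (hinj (h0.trans (map_zero f).symm)))
    obtain ⟨l, hl⟩ := (isSimpleModule_iff_toSpanSingleton_surjective.mp hSL).2 _ hfx (f ⟨y, hy⟩)
    refine ⟨l, ?_⟩
    rw [LinearMap.toSpanSingleton_apply, ← map_smul] at hl
    exact (congrArg Subtype.val (hinj hl)).symm

open IsLocalRing in
/-- The local rings obtained above are self-injective. -/
theorem local_self_injective (L : Type u) [CommRing L] [IsLocalRing L]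
    (h : ∀ x ∈ maximalIdeal L, ∀ y ∈ maximalIdeal L,
      x * y = 0 ∧ (x ≠ 0 → ∃ l, y = l * x)) : Module.Injective L L := by
  apply Module.Baer.injective
  intro I f
  by_cases hI : I = ⊤
  · subst hI
    refine ⟨f ∘ₗ LinearMap.codRestrict ⊤ LinearMap.id (fun _ => trivial), fun x hx => rfl⟩
  have hIM : I ≤ maximalIdeal L := IsLocalRing.le_maximalIdeal hI
  by_cases hb : I = ⊥
  · subst hb
    refine ⟨0, fun x hx => ?_⟩
    rw [Ideal.mem_bot] at hx
    subst hx
    exact (map_zero f).symm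
  obtain ⟨x, hx, hx0⟩ := Submodule.exists_mem_ne_zero_of_ne_bot hb
  have hyx : x * f ⟨x, hx⟩ = 0 := by
    rw [← smul_eq_mul, ← map_smul]
    have : x • (⟨x, hx⟩ : I) = 0 := Subtype.ext (h x (hIM hx) x (hIM hx)).1
    rw [this, map_zero]
  have hyM : f ⟨x, hx⟩ ∈ maximalIdeal L := by
    rw [mem_maximalIdeal, mem_nonunits_iff]
    intro hu
    exact hx0 (hu.mul_left_eq_zero.mp hyx)
  obtain ⟨l, hl⟩ := (h x (hIM hx) _ hyM).2 hx0
  refine ⟨LinearMap.toSpanSingleton L L l, fun z hz => ?_⟩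
  obtain ⟨k, rfl⟩ := (h x (hIM hx) z (hIM hz)).2 hx0
  have : (⟨k * x, hz⟩ : I) = k • ⟨x, hx⟩ := rfl
  rw [this, map_smul, hl, LinearMap.toSpanSingleton_apply, smul_eq_mul, smul_eq_mul]
  ring

/-- Easy direction: existence of a well-behaved idempotent and socle element. -/
theorem avr_exists_idem (R : Type u) [CommRing R] (n : ℕ) (c : Fin n → Submodule R R)
    (hc : DirectSum.IsInternal c) (hu : ∀ i, ∀ N P : Submodule R ↥(c i), N ≤ P ∨ P ≤ N)
    (hJ : (Ideal.jacobson (⊥ : Ideal R)) ^ 2 = ⊥) (m : Ideal R) [hm : m.IsMaximal] :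
    ∃ e x : R, e * e = e ∧ e ∉ m ∧ e * x = x ∧ x ≠ 0 ∧ (∀ a ∈ m, a * x = 0) ∧
      ∀ y, e * y = y → (∃ r, y = r * x) ∨ ∃ r, r * y = e := by
  obtain ⟨hind, hsup⟩ := (DirectSum.isInternal_submodule_iff_iSupIndep_and_iSup_eq_top c).mp hc
  have h1 : (1 : R) ∈ ⨆ i, c i := hsup ▸ Submodule.mem_top
  rw [Submodule.mem_iSup_iff_exists_finsupp] at h1
  obtain ⟨E, hE, hE1⟩ := h1
  have hsum : ∑ i, E i = 1 := by
    rw [← hE1, Finsupp.sum_fintype _ _ (fun _ => rfl)]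
  obtain ⟨i, hi⟩ : ∃ i, E i ∉ m := by
    by_contra! hcon
    exact hm.ne_top ((Ideal.eq_top_iff_one m).mpr (hsum ▸ Ideal.sum_mem _ (fun i _ => hcon i)))
  have hfix : ∀ y ∈ c i, E i * y = y := by
    intro y hy
    have h2 : y - E i * y ∈ c i := (c i).sub_mem hy ((c i).smul_mem (E i) hy)
    have h3 : y - E i * y ∈ ⨆ (j) (_ : j ≠ i), c j := by
      have : y - E i * y = ∑ j ∈ Finset.univ.erase i, y * E j := by
        rw [← Finset.mul_sum, eq_comm]
        have := Finset.add_sum_erase Finset.univ (fun j => E j) (Finset.mem_univ i)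
        simp only [hsum] at this
        rw [eq_sub_of_add_eq' this]
        ring
      rw [this]
      refine Submodule.sum_mem _ (fun j hj => ?_)
      exact Submodule.mem_iSup_of_mem j (Submodule.mem_iSup_of_mem (Finset.ne_of_mem_erase hj)
        ((c j).smul_mem y (hE j)))
    have := (Submodule.disjoint_def.mp (hind i)) _ h2 h3
    exact (sub_eq_zero.mp this).symm
  set e := E i with he
  have hee : e * e = e := hfix e (hE i)
  have hmem : ∀ r, e * r ∈ c i := fun r => by
    rw [mul_comm]; exact (c i).smul_mem r (hE i)
  have hcmp : ∀ y z, e * y = y → e * z = z → (∃ r, y = r * z) ∨ (∃ r, z = r * y) := by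
    intro y z hy hz
    have hy' : y ∈ c i := hy ▸ hmem y
    have hz' : z ∈ c i := hz ▸ hmem z
    rcases hu i (Submodule.span R {⟨y, hy'⟩}) (Submodule.span R {⟨z, hz'⟩}) with h | h
    · left
      obtain ⟨r, hr⟩ := Submodule.mem_span_singleton.mp (h (Submodule.mem_span_singleton_self _))
      exact ⟨r, (congrArg Subtype.val hr).symm⟩
    · right
      obtain ⟨r, hr⟩ := Submodule.mem_span_singleton.mp (h (Submodule.mem_span_singleton_self _))
      exact ⟨r, (congrArg Subtype.val hr).symm⟩
  have hinv : ∀ a, a ∉ m → ∃ s, s * a - 1 ∈ m := by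
    intro a ha
    obtain ⟨s, t, ht, hs⟩ := hm.exists_inv ha
    refine ⟨s, ?_⟩
    have : s * a - 1 = -t := by rw [← hs]; ring
    rw [this]
    exact m.neg_mem ht
  have hne : e ≠ 0 := fun h => hi (h ▸ m.zero_mem)
  by_cases h0 : ∀ a ∈ m, a * e = 0
  · refine ⟨e, e, hee, hi, hee, hne, h0, fun y hy => Or.inl ⟨y, ?_⟩⟩
    rw [mul_comm, hy]
  push Not at h0
  obtain ⟨a, ha, hae⟩ := h0
  -- `e m` lies in the Jacobson radical
  have hem : ∀ b ∈ m, b * e ∈ Ideal.jacobson (⊥ : Ideal R) := by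
    intro b hb
    rw [Ideal.jacobson, Ideal.mem_sInf]
    rintro m' ⟨-, hm'⟩
    by_contra hbm'
    have hem' : e ∉ m' := fun h => hbm' (m'.mul_mem_left b h)
    have hb' : b ∉ m' := fun h => hbm' (m'.mul_mem_right e h)
    have hmm : ¬ m' ≤ m := fun hle => hb' ((hm'.eq_of_le hm.ne_top hle) ▸ hb)
    obtain ⟨d, hd, hdm⟩ := Set.not_subset.mp hmm
    rcases hcmp (b * e) (d * e) (by linear_combination b * hee) (by linear_combination d * hee)
      with ⟨r, hr⟩ | ⟨r, hr⟩
    · apply hbm'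
      rw [hr]
      exact m'.mul_mem_left r (m'.mul_mem_right e hd)
    · have : d * e ∈ m := by
        rw [hr]
        exact m.mul_mem_left r (m.mul_mem_right e hb)
      exact (hm.isPrime.mem_or_mem this).elim hdm hi
  have hkill : ∀ b ∈ m, ∀ d ∈ m, b * (d * e) = 0 := by
    intro b hb d hd
    have : (b * e) * (d * e) ∈ (Ideal.jacobson (⊥ : Ideal R)) ^ 2 := by
      rw [pow_two]; exact Ideal.mul_mem_mul (hem b hb) (hem d hd)
    rw [hJ, Ideal.mem_bot] at this
    linear_combination this - b * d * hee
  have hxe : ∀ b, e * (b * e) = b * e := fun b => by linear_combination b * hee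
  have hgen : ∀ b ∈ m, ∃ r, b * e = r * (a * e) := by
    intro b hb
    rcases hcmp (b * e) (a * e) (hxe b) (hxe a) with h | ⟨r, hr⟩
    · exact h
    · have hrm : r ∉ m := fun h => hae (by rw [hr]; exact hkill r h b hb)
      obtain ⟨s, hs⟩ := hinv r hrm
      refine ⟨s, ?_⟩
      have := hkill _ hs b hb
      rw [hr]
      linear_combination -this
  refine ⟨e, a * e, hee, hi, hxe a, hae, fun b hb => hkill b hb a ha, fun y hy => ?_⟩
  by_cases hym : y ∈ m
  · left
    obtain ⟨r, hr⟩ := hgen y hym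
    exact ⟨r, by rw [← hr, mul_comm, hy]⟩
  · right
    obtain ⟨s, hs⟩ := hinv y hym
    -- `s y - e ∈ e m`
    obtain ⟨r, hr⟩ := hgen _ hs
    rcases hcmp y (a * e) hy (hxe a) with ⟨k, hk⟩ | ⟨k, hk⟩
    · exfalso
      apply hym
      rw [hk]
      exact m.mul_mem_left k (m.mul_mem_right e ha)
    · refine ⟨s - r * k, ?_⟩
      linear_combination r * hk + hr - s * hy

/-- Easy direction. -/
theorem avr_of_qf (R : Type u) [CommRing R] (hinj : Module.Injective R R)
    (n : ℕ) (c : Fin n → Submodule R R)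
    (hc : DirectSum.IsInternal c) (hu : ∀ i, ∀ N P : Submodule R ↥(c i), N ≤ P ∨ P ≤ N)
    (hJ : (Ideal.jacobson (⊥ : Ideal R)) ^ 2 = ⊥) : AlmostVRingLeft.{u, u, u} R := by
  intro S _ _ hS A B _ _ _ _ i hi f
  obtain ⟨m, hm, ⟨φ⟩⟩ := isSimpleModule_iff_quot_maximal.mp hS
  obtain ⟨e, x, hee, hem, hex, hx0, hmx, hdich⟩ := avr_exists_idem R n c hc hu hJ m
  let ι : S →ₗ[R] R := (Submodule.liftQ m (LinearMap.toSpanSingleton R R x) (by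
    intro a ha
    rw [LinearMap.mem_ker, LinearMap.toSpanSingleton_apply]
    exact hmx a ha)) ∘ₗ φ.toLinearMap
  have hι : ∀ r, ι (φ.symm (Submodule.Quotient.mk r)) = r * x := by
    intro r
    simp only [ι, LinearMap.comp_apply, LinearEquiv.coe_coe, LinearEquiv.apply_symm_apply]
    rfl
  have hιe : ∀ s, e * ι s = ι s := by
    intro s
    obtain ⟨t, rfl⟩ := φ.symm.surjective s
    obtain ⟨r, rfl⟩ := Submodule.Quotient.mk_surjective _ t
    rw [hι]
    linear_combination r * hex
  have hιinj : Function.Injective ι := by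
    rw [injective_iff_map_eq_zero]
    intro s hs
    obtain ⟨t, rfl⟩ := φ.symm.surjective s
    obtain ⟨r, rfl⟩ := Submodule.Quotient.mk_surjective _ t
    rw [hι] at hs
    by_cases hr : r ∈ m
    · rw [(Submodule.Quotient.mk_eq_zero m).mpr hr, map_zero]
    · exfalso
      obtain ⟨s, t, ht, hst⟩ := hm.exists_inv hr
      apply hx0
      linear_combination s * hs + hmx t ht - x * hst
  obtain ⟨g₀, hg₀⟩ := hinj.out i hi (ι ∘ₗ f)
  let g : B →ₗ[R] R := e • g₀
  have hg : ∀ b, g b = e * g₀ b := fun b => rfl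
  have hgi : ∀ a, g (i a) = ι (f a) := by
    intro a
    rw [hg, hg₀]
    exact hιe _
  have hge : ∀ b, e * g b = g b := by
    intro b
    rw [hg]; linear_combination g₀ b * hee
  by_cases hcase : ∃ b, g b = e
  · right
    obtain ⟨b, hb⟩ := hcase
    refine ⟨Submodule.span R {e • b}, ?_, ?_⟩
    · intro hbot
      rw [Submodule.span_singleton_eq_bot] at hbot
      have := congrArg g hbot
      rw [map_smul, hb, map_zero, smul_eq_mul, hee] at this
      exact hem (this ▸ m.zero_mem)
    let s : R →ₗ[R] Submodule.span R {e • b} :=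
      LinearMap.toSpanSingleton R _ ⟨e • b, Submodule.mem_span_singleton_self _⟩
    refine ⟨s ∘ₗ g, ?_, s ∘ₗ ι, ?_⟩
    · ext ⟨d, hd⟩
      obtain ⟨r, rfl⟩ := Submodule.mem_span_singleton.mp hd
      change g (r • e • b) • e • b = r • e • b
      rw [map_smul, map_smul, hb, smul_eq_mul, smul_eq_mul, hee, mul_smul, smul_smul e e, hee]
    · ext a
      change ((s (ι (f a)) : Submodule.span R {e • b}) : B) = s (g (i a))
      rw [hgi]
  · left
    have hr : ∀ b, g b ∈ LinearMap.range ι := by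
      intro b
      rcases hdich (g b) (hge b) with ⟨r, hr⟩ | ⟨r, hr⟩
      · exact ⟨_, (hι r).trans hr.symm⟩
      · exact absurd ⟨r • b, by rw [map_smul, smul_eq_mul, hr]⟩ hcase
    let ε := LinearEquiv.ofInjective ι hιinj
    refine ⟨ε.symm.toLinearMap ∘ₗ g.codRestrict _ hr, ?_⟩
    ext a
    change ε.symm ⟨g (i a), _⟩ = f a
    rw [LinearEquiv.symm_apply_eq]
    apply Subtype.ext
    exact hgi a

open IsLocalRing in
/-- Hard direction. -/
theorem qf_of_avr (R : Type u) [CommRing R] (hN : ∀ I : Ideal R, I.IsMaximal → I.FG)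
    (hV : AlmostVRingLeft.{u, u, u} R) :
    IsArtinianRing R ∧ Module.Injective R R ∧
        (∃ (n : ℕ) (c : Fin n → Submodule R R), DirectSum.IsInternal c ∧
          ∀ i, ∀ N P : Submodule R ↥(c i), N ≤ P ∨ P ≤ N) ∧
        (Ideal.jacobson (⊥ : Ideal R)) ^ 2 = ⊥ := by
  have hloc := fun (m : Ideal R) (hm : m.IsMaximal) => avr_local R hV m (hN m hm)
  have hmem : ∀ (m : Ideal R) [m.IsMaximal] (a : R), a ∈ m →
      algebraMap R (Localization.AtPrime m) a ∈ maximalIdeal (Localization.AtPrime m) :=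
    fun m _ a ha => (IsLocalization.AtPrime.to_map_mem_maximal_iff _ m a).mpr ha
  have hprime : ∀ p : Ideal R, p.IsPrime → p.IsMaximal := by
    intro p hp
    obtain ⟨m, hm, hpm⟩ := p.exists_le_maximal hp.ne_top
    suffices m ≤ p by rwa [le_antisymm hpm this]
    intro a ha
    have h0 := (hloc m hm _ (hmem m a ha) _ (hmem m a ha)).1
    rw [← map_mul, IsLocalization.map_eq_zero_iff m.primeCompl] at h0
    obtain ⟨s, hs⟩ := h0
    have hs' : (s : R) * (a * a) ∈ p := hs ▸ p.zero_mem
    rcases hp.mem_or_mem hs' with h | h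
    · exact absurd (hpm h) s.2
    · exact (hp.mem_or_mem h).elim id id
  have hNoeth : IsNoetherianRing R := IsNoetherianRing.of_prime fun p hp => hN p (hprime p hp)
  have hdim : Ring.KrullDimLE 0 R := Ring.krullDimLE_zero_iff.mpr hprime
  have hArt : IsArtinianRing R := isArtinianRing_iff_isNoetherianRing_krullDimLE_zero.mpr
    ⟨hNoeth, hdim⟩
  have hzero : ∀ a : R, (∀ m : MaximalSpectrum R,
      algebraMap R (Localization.AtPrime m.1) a = 0) → a = 0 := by
    intro a ha
    apply MaximalSpectrum.toPiLocalization_injective R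
    rw [map_zero]
    exact funext ha
  refine ⟨hArt, ?_, ?_, ?_⟩
  · exact Module.injective_of_localization_maximal'
      (fun P _ => Localization.AtPrime P) (fun P _ => Localization.AtPrime P)
      (fun P _ => Algebra.linearMap R (Localization.AtPrime P))
      (fun I hI => local_self_injective _ (hloc I hI))
  · classical
    have hsurj := (MaximalSpectrum.toPiLocalizationEquiv R).surjective
    choose e he using fun m : MaximalSpectrum R =>
      hsurj (Pi.single m (1 : Localization.AtPrime m.1))
    have he1 : ∀ m, algebraMap R (Localization.AtPrime m.1) (e m) = 1 := by
      intro m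
      have := congrFun (he m) m
      rwa [Pi.single_eq_same] at this
    have he0 : ∀ m m', m' ≠ m → algebraMap R (Localization.AtPrime m'.1) (e m) = 0 := by
      intro m m' hne
      have := congrFun (he m) m'
      rwa [Pi.single_eq_of_ne hne] at this
    have hee : ∀ m, e m * e m = e m := by
      intro m
      rw [← sub_eq_zero]
      apply hzero
      intro m'
      by_cases h : m' = m
      · subst h; simp [he1]
      · simp [he0 m m' h]
    have heo : ∀ m m', m' ≠ m → e m * e m' = 0 := by
      intro m m' hne
      apply hzero
      intro k
      by_cases h : k = m
      · subst h; simp [he0 m' k hne.symm]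
      · simp [he0 m k h]
    obtain ⟨n, ⟨σ⟩⟩ := Finite.exists_equiv_fin (MaximalSpectrum R)
    have hesum : ∑ i, e (σ.symm i) = 1 := by
      rw [← sub_eq_zero]
      apply hzero
      intro m
      rw [map_sub, map_one, map_sum, Finset.sum_eq_single (σ m), Equiv.symm_apply_apply, he1,
        sub_self]
      · intro i _ hi
        apply he0
        rintro rfl
        simp at hi
      · simp
    refine ⟨n, fun i => Submodule.span R {e (σ.symm i)}, ?_, ?_⟩
    · rw [DirectSum.isInternal_submodule_iff_iSupIndep_and_iSup_eq_top]
      constructor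
      · intro i
        rw [Submodule.disjoint_def]
        intro x hx hx'
        obtain ⟨r, rfl⟩ := Submodule.mem_span_singleton.mp hx
        have hle : (⨆ (j) (_ : j ≠ i), Submodule.span R {e (σ.symm j)}) ≤
            LinearMap.ker (LinearMap.mulLeft R (e (σ.symm i))) := by
          refine iSup₂_le fun j hj => ?_
          rw [Submodule.span_singleton_le_iff_mem, LinearMap.mem_ker, LinearMap.mulLeft_apply]
          exact heo _ _ (fun h => hj (σ.symm.injective h))
        have h := hle hx'
        rw [LinearMap.mem_ker, LinearMap.mulLeft_apply, smul_eq_mul] at h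
        rw [smul_eq_mul]
        linear_combination h - r * hee (σ.symm i)
      · rw [Ideal.eq_top_iff_one, ← hesum]
        exact Submodule.sum_mem _ fun i _ => Submodule.mem_iSup_of_mem i
          (Submodule.mem_span_singleton_self _)
    · suffices H : ∀ (m : MaximalSpectrum R) (N P : Submodule R ↥(Submodule.span R {e m})),
          N ≤ P ∨ P ≤ N from fun i => H (σ.symm i)
      intro m N P
      -- elementwise comparability
      have hcmpL : ∀ x y : Localization.AtPrime m.1, (∃ l, y = l * x) ∨ (∃ l, x = l * y) := by
        intro x y
        by_cases hx : x ∈ maximalIdeal (Localization.AtPrime m.1)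
        · by_cases hy : y ∈ maximalIdeal (Localization.AtPrime m.1)
          · by_cases hx0 : x = 0
            · exact Or.inr ⟨0, by simp [hx0]⟩
            · exact Or.inl ((hloc m.1 m.2 x hx y hy).2 hx0)
          · obtain ⟨u, rfl⟩ := IsLocalRing.notMem_maximalIdeal.mp hy
            exact Or.inr ⟨x * ↑u⁻¹, by simp⟩
        · obtain ⟨u, rfl⟩ := IsLocalRing.notMem_maximalIdeal.mp hx
          exact Or.inl ⟨y * ↑u⁻¹, by simp⟩
      have hlift : ∀ a b : R, (∃ l, algebraMap R (Localization.AtPrime m.1) b =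
          l * algebraMap R _ a) → ∃ r, b * e m = r * (a * e m) := by
        rintro a b ⟨l, hl⟩
        obtain ⟨r, rfl⟩ := IsArtinianRing.localization_surjective m.1.primeCompl _ l
        refine ⟨r, ?_⟩
        rw [← sub_eq_zero]
        apply hzero
        intro k
        by_cases h : k = m
        · subst h; simp [he1, hl]
        · simp [he0 m k h]
      have hcmp : ∀ x y : Submodule.span R {e m}, (∃ r : R, y = r • x) ∨ (∃ r : R, x = r • y) := by
        rintro ⟨x, hx⟩ ⟨y, hy⟩
        obtain ⟨a, rfl⟩ := Submodule.mem_span_singleton.mp hx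
        obtain ⟨b, rfl⟩ := Submodule.mem_span_singleton.mp hy
        rcases hcmpL (algebraMap R _ a) (algebraMap R _ b) with h | h
        · obtain ⟨r, hr⟩ := hlift a b h
          exact Or.inl ⟨r, Subtype.ext hr⟩
        · obtain ⟨r, hr⟩ := hlift b a h
          exact Or.inr ⟨r, Subtype.ext hr⟩
      by_cases hNP : N ≤ P
      · exact Or.inl hNP
      · right
        obtain ⟨x, hxN, hxP⟩ := Set.not_subset.mp hNP
        intro y hy
        rcases hcmp x y with ⟨r, rfl⟩ | ⟨r, rfl⟩
        · exact N.smul_mem r hxN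
        · exact absurd (P.smul_mem r hy) hxP
  · rw [eq_bot_iff, pow_two, Ideal.mul_le]
    intro a ha b hb
    rw [Ideal.mem_bot]
    apply hzero
    intro m
    have hJ : ∀ a ∈ Ideal.jacobson (⊥ : Ideal R), a ∈ m.1 := fun a ha =>
      (Ideal.mem_sInf.mp ha) ⟨bot_le, m.2⟩
    rw [map_mul]
    have := m.2
    exact (hloc m.1 m.2 _ (hmem m.1 a (hJ a ha)) _ (hmem m.1 b (hJ b hb))).1


/-- For a commutative ring `R` in which every maximal ideal is finitely
generated, `R` is an almost V-ring iff `R` is a quasi-Frobenius serial ring with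
`J(R)² = 0`. -/
theorem almostVRing_iff_quasiFrobenius_serial (R : Type u) [CommRing R]
    (hN : ∀ I : Ideal R, I.IsMaximal → I.FG) :
    AlmostVRingLeft.{u, u, u} R ↔
      (IsArtinianRing R ∧ Module.Injective R R ∧
        (∃ (n : ℕ) (c : Fin n → Submodule R R), DirectSum.IsInternal c ∧
          ∀ i, ∀ N P : Submodule R ↥(c i), N ≤ P ∨ P ≤ N) ∧
        (Ideal.jacobson (⊥ : Ideal R)) ^ 2 = ⊥) := by
  constructor
  · exact qf_of_avr R hN
  · rintro ⟨-, hinj, ⟨n, c, hc, hu⟩, hJ⟩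
    exact avr_of_qf R hinj n c hc hu hJ
end

section
/- Let R be a ring. The following statements are equivalent: (a) every minimal right ideal of R is min-projective; (b) Ext²_R(R/I, M) = 0 for every mininjective right R-module M and every minimal right ideal I of R; (c) for every short exact sequence 0 → M → N → L → 0 of right R-modules with M and N mininjective, the module L is mininjective. -/
universe u v w v'

open MulOpposite

section RightDefs
variable (R : Type u) [Ring R]

/-- A right `R`-module (i.e. an `Rᵐᵒᵖ`-module) `M` is mininjective if every homomorphism
from a minimal right ideal `I` of `R` into `M` extends to a homomorphism `R → M`. -/
def IsMininjective (M : Type v) [AddCommGroup M] [Module Rᵐᵒᵖ M] : Prop :=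
  ∀ I : Submodule Rᵐᵒᵖ R, IsAtom I → ∀ f : ↥I →ₗ[Rᵐᵒᵖ] M,
    ∃ g : R →ₗ[Rᵐᵒᵖ] M, ∀ x : ↥I, g ↑x = f x

/-- A right `R`-module `M` is min-projective if every short exact sequence
`0 → N → X → M → 0` with `N` mininjective splits (equivalently `Ext¹(M, N) = 0`
for every mininjective `N`). -/
def IsMinProjective (M : Type v) [AddCommGroup M] [Module Rᵐᵒᵖ M] : Prop :=
  ∀ (X : Type (max u v)) [AddCommGroup X] [Module Rᵐᵒᵖ X] (p : X →ₗ[Rᵐᵒᵖ] M),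
    Function.Surjective p → IsMininjective R ↥(LinearMap.ker p) →
      ∃ s : M →ₗ[Rᵐᵒᵖ] X, p ∘ₗ s = LinearMap.id

/-- `R` is right strongly min-coherent if every minimal right ideal of `R` is min-projective. -/
def RightStronglyMinCoherent : Prop :=
  ∀ I : Submodule Rᵐᵒᵖ R, IsAtom I → IsMinProjective R ↥I

/-- `R` is a right quasi V-ring if every simple right `R`-module which is not isomorphic to
any right ideal of `R` is injective. -/
def RightQuasiVRing : Prop :=
  ∀ (S : Type v) [AddCommGroup S] [Module Rᵐᵒᵖ S], IsSimpleModule Rᵐᵒᵖ S →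
    (¬ ∃ I : Submodule Rᵐᵒᵖ R, Nonempty (S ≃ₗ[Rᵐᵒᵖ] ↥I)) → Module.Injective Rᵐᵒᵖ S

/-- `R` is a right GV-ring if every simple right `R`-module is injective or projective. -/
def RightGVRing : Prop :=
  ∀ (S : Type v) [AddCommGroup S] [Module Rᵐᵒᵖ S], IsSimpleModule Rᵐᵒᵖ S →
    Module.Injective Rᵐᵒᵖ S ∨ Module.Projective Rᵐᵒᵖ S

/-- `R` is right Kasch if every simple right `R`-module is isomorphic to a right ideal of `R`. -/
def RightKasch : Prop :=
  ∀ (S : Type v) [AddCommGroup S] [Module Rᵐᵒᵖ S], IsSimpleModule Rᵐᵒᵖ S →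
    ∃ I : Submodule Rᵐᵒᵖ R, Nonempty (S ≃ₗ[Rᵐᵒᵖ] ↥I)

/-- A right `R`-module `M` is almost injective if for every monomorphism `i : A → B` and
every `f : A → M`, either `f` extends to `B`, or there are a nonzero direct summand `D` of
`B` (with projection `π : B → D`) and `h : M → D` with `h ∘ f = π ∘ i`. -/
def IsAlmostInjective (M : Type v) [AddCommGroup M] [Module Rᵐᵒᵖ M] : Prop :=
  ∀ (A B : Type w) [AddCommGroup A] [AddCommGroup B] [Module Rᵐᵒᵖ A] [Module Rᵐᵒᵖ B]
    (i : A →ₗ[Rᵐᵒᵖ] B), Function.Injective i → ∀ f : A →ₗ[Rᵐᵒᵖ] M,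
    (∃ g : B →ₗ[Rᵐᵒᵖ] M, g ∘ₗ i = f) ∨
    (∃ D : Submodule Rᵐᵒᵖ B, D ≠ ⊥ ∧ ∃ π : B →ₗ[Rᵐᵒᵖ] ↥D,
      π ∘ₗ D.subtype = LinearMap.id ∧ ∃ h : M →ₗ[Rᵐᵒᵖ] ↥D, h ∘ₗ f = π ∘ₗ i)

/-- `R` is a right almost V-ring if every simple right `R`-module is almost injective. -/
def RightAlmostVRing : Prop :=
  ∀ (S : Type v) [AddCommGroup S] [Module Rᵐᵒᵖ S], IsSimpleModule Rᵐᵒᵖ S →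
    IsAlmostInjective.{u, v, w} R S

/-- `R` is right serial if `R`, as a right `R`-module, is an internal direct sum of finitely
many uniserial submodules. -/
def RightSerial : Prop :=
  ∃ (n : ℕ) (c : Fin n → Submodule Rᵐᵒᵖ R), DirectSum.IsInternal c ∧
    ∀ i, ∀ N P : Submodule Rᵐᵒᵖ ↥(c i), N ≤ P ∨ P ≤ N

/-- `R` is left serial if `R`, as a left `R`-module, is an internal direct sum of finitely
many uniserial submodules. -/
def LeftSerial : Prop :=
  ∃ (n : ℕ) (c : Fin n → Submodule R R), DirectSum.IsInternal c ∧
    ∀ i, ∀ N P : Submodule R ↥(c i), N ≤ P ∨ P ≤ N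

/-- The square of the Jacobson radical of `R` is zero. -/
def JacobsonSquareZero : Prop :=
  ∀ x ∈ (⊥ : TwoSidedIdeal R).jacobson, ∀ y ∈ (⊥ : TwoSidedIdeal R).jacobson, x * y = 0

end RightDefs

open CategoryTheory in
lemma minAux_resolution (R : Type u) [Ring R] (Q : Type u) [AddCommGroup Q] [Module Rᵐᵒᵖ Q] :
    ∃ (P0 P1 P2 : ModuleCat.{u} Rᵐᵒᵖ) (_ : Module.Projective Rᵐᵒᵖ P0)
      (_ : Module.Projective Rᵐᵒᵖ P1)
      (e : P0 →ₗ[Rᵐᵒᵖ] Q) (d1 : P1 →ₗ[Rᵐᵒᵖ] P0) (d2 : P2 →ₗ[Rᵐᵒᵖ] P1),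
      Function.Surjective e ∧ LinearMap.range d1 = LinearMap.ker e ∧
      LinearMap.range d2 = LinearMap.ker d1 ∧
      ∀ (M : Type u) [AddCommGroup M] [Module Rᵐᵒᵖ M],
        Subsingleton (((Ext ℤ (ModuleCat.{u} Rᵐᵒᵖ) 2).obj
              (Opposite.op (ModuleCat.of Rᵐᵒᵖ Q))).obj (ModuleCat.of Rᵐᵒᵖ M)) ↔
        ∀ φ : P2 →ₗ[Rᵐᵒᵖ] M, (∀ x, d2 x = 0 → φ x = 0) →
          ∃ χ : P1 →ₗ[Rᵐᵒᵖ] M, χ ∘ₗ d2 = φ := by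
  let P := projectiveResolution (ModuleCat.of Rᵐᵒᵖ Q)
  have hpr : ∀ n, Module.Projective Rᵐᵒᵖ (P.complex.X n) := fun n =>
    (IsProjective.iff_projective _).2 (P.projective n)
  have hex : LinearMap.range (P.complex.d 3 2).hom = LinearMap.ker (P.complex.d 2 1).hom :=
    (P.exact_succ 1).moduleCat_range_eq_ker
  let e : P.complex.X 0 ⟶ ModuleCat.of Rᵐᵒᵖ Q := P.π.f 0
  have he0 : P.complex.d 1 0 ≫ e = 0 := P.complex_d_comp_π_f_zero
  have hepi : Epi e := inferInstanceAs (Epi (P.π.f 0))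
  have hex0 : (ShortComplex.mk _ _ he0).Exact :=
    ShortComplex.exact_of_g_is_cokernel _ P.isColimitCokernelCofork
  refine ⟨P.complex.X 0, P.complex.X 1, P.complex.X 2, hpr 0, hpr 1, e.hom,
    (P.complex.d 1 0).hom, (P.complex.d 2 1).hom, (ModuleCat.epi_iff_surjective e).1 hepi,
    hex0.moduleCat_range_eq_ker, (P.exact_succ 0).moduleCat_range_eq_ker, ?_⟩
  intro M _ _
  rw [(P.isoExt (R := ℤ) 2 (ModuleCat.of Rᵐᵒᵖ M)).toLinearEquiv.toEquiv.subsingleton_congr,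
    ← ModuleCat.isZero_iff_subsingleton,
    ← HomologicalComplex.exactAt_iff_isZero_homology,
    HomologicalComplex.exactAt_iff' _ 1 2 3 (by simp) (by simp),
    ShortComplex.moduleCat_exact_iff]
  constructor
  · intro h φ hφ
    obtain ⟨χ, hχ⟩ := h (ModuleCat.ofHom φ : P.complex.X 2 ⟶ ModuleCat.of Rᵐᵒᵖ M) (by
      change P.complex.d 3 2 ≫ ModuleCat.ofHom φ = 0
      ext x
      apply hφ
      have : (P.complex.d 3 2).hom x ∈ LinearMap.ker (P.complex.d 2 1).hom := hex ▸ ⟨x, rfl⟩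
      exact this)
    change P.complex.d 2 1 ≫ χ = ModuleCat.ofHom φ at hχ
    exact ⟨ModuleCat.Hom.hom (A := P.complex.X 1) (B := ModuleCat.of Rᵐᵒᵖ M) χ,
      congrArg (ModuleCat.Hom.hom (A := P.complex.X 2) (B := ModuleCat.of Rᵐᵒᵖ M)) hχ⟩
  · intro h φ hφ
    change P.complex.d 3 2 ≫ φ = 0 at hφ
    obtain ⟨χ, hχ⟩ := h φ.hom (by
      intro x hx
      have : x ∈ LinearMap.range (P.complex.d 3 2).hom := hex ▸ hx
      obtain ⟨y, rfl⟩ := this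
      exact LinearMap.congr_fun (congrArg ModuleCat.Hom.hom hφ) y)
    refine ⟨ModuleCat.ofHom χ, ?_⟩
    change P.complex.d 2 1 ≫ ModuleCat.ofHom χ = φ
    ext x
    exact (LinearMap.congr_fun hχ x)

lemma minAux_projective (R : Type u) [Ring R] : Module.Projective Rᵐᵒᵖ R :=
  Module.Projective.of_equiv (R := Rᵐᵒᵖ) (σ := RingHom.id Rᵐᵒᵖ) (M := Rᵐᵒᵖ)
    { toFun := fun x => unop x
      invFun := fun x => op x
      map_add' := fun _ _ => rfl
      map_smul' := fun _ _ => rfl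
      left_inv := fun _ => rfl
      right_inv := fun _ => rfl }

lemma IsMininjective.of_equiv (R : Type u) [Ring R] {M N : Type*} [AddCommGroup M]
    [Module Rᵐᵒᵖ M] [AddCommGroup N] [Module Rᵐᵒᵖ N] (e : M ≃ₗ[Rᵐᵒᵖ] N)
    (h : IsMininjective R M) : IsMininjective R N := by
  intro I hI f
  obtain ⟨g, hg⟩ := h I hI (e.symm.toLinearMap ∘ₗ f)
  exact ⟨e.toLinearMap ∘ₗ g, fun x => by simp [hg]⟩

/-- Extension of a map over the middle term, (a) implies (b). -/
lemma minAux_ab (R : Type u) [Ring R] (I : Submodule Rᵐᵒᵖ R)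
    (hI : IsMinProjective R ↥I) (P0 P1 P2 M : Type u) [AddCommGroup P0] [AddCommGroup P1]
    [AddCommGroup P2] [AddCommGroup M] [Module Rᵐᵒᵖ P0] [Module Rᵐᵒᵖ P1] [Module Rᵐᵒᵖ P2]
    [Module Rᵐᵒᵖ M] [Module.Projective Rᵐᵒᵖ P0]
    (e : P0 →ₗ[Rᵐᵒᵖ] R ⧸ I) (d1 : P1 →ₗ[Rᵐᵒᵖ] P0) (d2 : P2 →ₗ[Rᵐᵒᵖ] P1)
    (r : R →ₗ[Rᵐᵒᵖ] P0) (t : P0 →ₗ[Rᵐᵒᵖ] R) (hr : ∀ x, e (r x) = I.mkQ x)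
    (ht : ∀ x, I.mkQ (t x) = e x)
    (h1 : LinearMap.range d1 = LinearMap.ker e)
    (h2 : LinearMap.range d2 = LinearMap.ker d1)
    (hM : IsMininjective R M) (φ : P2 →ₗ[Rᵐᵒᵖ] M) (hφ : ∀ x, d2 x = 0 → φ x = 0) :
    ∃ χ : P1 →ₗ[Rᵐᵒᵖ] M, χ ∘ₗ d2 = φ := by
  have hd1 : ∀ z, e z = 0 → ∃ p, d1 p = z := fun z hz => by
    have : z ∈ LinearMap.range d1 := h1 ▸ hz
    exact this
  have hd2 : ∀ p, d1 p = 0 → ∃ x, d2 x = p := fun z hz => by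
    have : z ∈ LinearMap.range d2 := h2 ▸ hz
    exact this
  have hed : ∀ p, e (d1 p) = 0 := fun p => by
    have : d1 p ∈ LinearMap.ker e := h1 ▸ ⟨p, rfl⟩
    exact this
  have hdd : ∀ x, d1 (d2 x) = 0 := fun p => by
    have : d2 p ∈ LinearMap.ker d1 := h2 ▸ ⟨p, rfl⟩
    exact this
  let W : Submodule Rᵐᵒᵖ (M × P1) := LinearMap.range (φ.prod (-d2))
  have hW : W ≤ LinearMap.ker (d1 ∘ₗ LinearMap.snd Rᵐᵒᵖ M P1) := by
    rintro _ ⟨x, rfl⟩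
    simp [hdd]
  let π : ((M × P1) ⧸ W) →ₗ[Rᵐᵒᵖ] P0 := W.liftQ _ hW
  have hπ : ∀ m p, π (W.mkQ (m, p)) = d1 p := fun m p => rfl
  let j : M →ₗ[Rᵐᵒᵖ] ((M × P1) ⧸ W) := W.mkQ ∘ₗ LinearMap.inl Rᵐᵒᵖ M P1
  have hj : Function.Injective j := by
    rw [injective_iff_map_eq_zero]
    intro m hm
    have hm' : (m, (0 : P1)) ∈ W := (Submodule.Quotient.mk_eq_zero W).1 hm
    obtain ⟨x, hx⟩ := hm'
    have hx1 : φ x = m := congrArg Prod.fst hx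
    have hx2 : - d2 x = 0 := congrArg Prod.snd hx
    rw [← hx1]
    exact hφ x (neg_eq_zero.1 hx2)
  have hglue : ∀ x, W.mkQ ((0 : M), d2 x) = j (φ x) := by
    intro x
    symm
    refine (Submodule.Quotient.eq W).2 ⟨x, ?_⟩
    simp
  have hπj : ∀ m, π (j m) = 0 := fun m => (hπ m 0).trans d1.map_zero
  have hker : ∀ y, π y = 0 → ∃ m, j m = y := by
    intro y hy
    obtain ⟨⟨m, p⟩, rfl⟩ := W.mkQ_surjective y
    obtain ⟨x, rfl⟩ := hd2 p hy
    refine ⟨m + φ x, ?_⟩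
    rw [map_add, ← hglue]
    change W.mkQ (m, 0) + _ = _
    rw [← map_add]
    simp
  let X : Submodule Rᵐᵒᵖ (((M × P1) ⧸ W) × I) :=
    LinearMap.ker (π ∘ₗ LinearMap.fst _ _ _ - r ∘ₗ I.subtype ∘ₗ LinearMap.snd _ _ _)
  have hX : ∀ y (a : I), (y, a) ∈ X ↔ π y = r a := by
    intro y a
    simp [X, sub_eq_zero]
  let p : X →ₗ[Rᵐᵒᵖ] I := LinearMap.snd _ _ _ ∘ₗ X.subtype
  have hp : Function.Surjective p := by
    intro a
    obtain ⟨q, hq⟩ := hd1 (r a) (by rw [hr]; simp)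
    exact ⟨⟨(W.mkQ (0, q), a), (hX _ _).2 (by rw [hπ, hq])⟩, rfl⟩
  let k : M →ₗ[Rᵐᵒᵖ] LinearMap.ker p :=
    LinearMap.codRestrict _ (LinearMap.codRestrict X (LinearMap.inl _ _ _ ∘ₗ j)
      (fun m => (hX _ _).2 (by simp [hπj]))) (fun m => rfl)
  have hk : Function.Bijective k := by
    constructor
    · intro a b hab
      exact hj (congrArg (fun z => z.1.1.1) hab)
    · rintro ⟨⟨⟨y, a⟩, hy⟩, ha⟩
      have ha' : a = 0 := ha
      subst ha'
      obtain ⟨m, rfl⟩ := hker y (by rw [(hX _ _).1 hy]; simp)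
      exact ⟨m, rfl⟩
  obtain ⟨s, hs⟩ := hI X p hp (hM.of_equiv R (LinearEquiv.ofBijective k hk))
  let s1 : I →ₗ[Rᵐᵒᵖ] ((M × P1) ⧸ W) := LinearMap.fst _ _ _ ∘ₗ X.subtype ∘ₗ s
  have hs1 : ∀ a, π (s1 a) = r a := by
    intro a
    have h3 : (s a).1.2 = a := (LinearMap.congr_fun hs a)
    have h4 := (hX (s a).1.1 (s a).1.2).1 (s a).2
    rw [h3] at h4
    exact h4
  let δ : P0 →ₗ[Rᵐᵒᵖ] LinearMap.ker e :=
    LinearMap.codRestrict _ (LinearMap.id - r ∘ₗ t) (fun x => by simp [hr, ht x |>.symm])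
  obtain ⟨l, hl⟩ := Module.projective_lifting_property
    (d1.codRestrict (LinearMap.ker e) hed) δ (by
      rintro ⟨z, hz⟩
      obtain ⟨q, rfl⟩ := hd1 z hz
      exact ⟨q, rfl⟩)
  have hl' : ∀ x, d1 (l x) = x - r (t x) := fun x => congrArg Subtype.val (LinearMap.congr_fun hl x)
  let td : P1 →ₗ[Rᵐᵒᵖ] I := (t ∘ₗ d1).codRestrict I (fun q => by
    have := (ht (d1 q)).trans (hed q)
    simpa using this)
  let i2 : P1 →ₗ[Rᵐᵒᵖ] ((M × P1) ⧸ W) := W.mkQ ∘ₗ LinearMap.inr Rᵐᵒᵖ M P1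
  have hi2 : ∀ q, π (i2 q) = d1 q := fun q => hπ 0 q
  let c : P1 →ₗ[Rᵐᵒᵖ] LinearMap.ker π :=
    (i2 - (s1 ∘ₗ td + i2 ∘ₗ l ∘ₗ d1)).codRestrict _ (fun q => by
      have : ((td q : I) : R) = t (d1 q) := rfl
      simp [hi2, hs1, hl', this])
  let E : M ≃ₗ[Rᵐᵒᵖ] LinearMap.ker π := LinearEquiv.ofBijective
    (j.codRestrict _ hπj) ⟨fun a b hab => hj (congrArg Subtype.val hab), by
      rintro ⟨y, hy⟩
      obtain ⟨m, rfl⟩ := hker y hy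
      exact ⟨m, rfl⟩⟩
  refine ⟨E.symm.toLinearMap ∘ₗ c, ?_⟩
  ext x
  change E.symm (c (d2 x)) = φ x
  rw [LinearEquiv.symm_apply_eq]
  apply Subtype.ext
  change i2 (d2 x) - (s1 (td (d2 x)) + i2 (l (d1 (d2 x)))) = j (φ x)
  have : td (d2 x) = 0 := Subtype.ext (by
    change t (d1 (d2 x)) = 0
    rw [hdd, map_zero])
  rw [this, hdd]
  simp only [map_zero, add_zero, sub_zero]
  exact hglue x

lemma minAux_bc (R : Type u) [Ring R] (I : Submodule Rᵐᵒᵖ R) (hI : IsAtom I)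
    (P0 P1 P2 M N L : Type u) [AddCommGroup P0] [AddCommGroup P1]
    [AddCommGroup P2] [AddCommGroup M] [Module Rᵐᵒᵖ P0] [Module Rᵐᵒᵖ P1] [Module Rᵐᵒᵖ P2]
    [Module Rᵐᵒᵖ M] [AddCommGroup N] [Module Rᵐᵒᵖ N] [AddCommGroup L] [Module Rᵐᵒᵖ L]
    [Module.Projective Rᵐᵒᵖ P1]
    (e : P0 →ₗ[Rᵐᵒᵖ] R ⧸ I) (d1 : P1 →ₗ[Rᵐᵒᵖ] P0) (d2 : P2 →ₗ[Rᵐᵒᵖ] P1)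
    (r : R →ₗ[Rᵐᵒᵖ] P0) (t : P0 →ₗ[Rᵐᵒᵖ] R) (hr : ∀ x, e (r x) = I.mkQ x)
    (ht : ∀ x, I.mkQ (t x) = e x)
    (h1 : LinearMap.range d1 = LinearMap.ker e)
    (h2 : LinearMap.range d2 = LinearMap.ker d1)
    (hext : ∀ φ : P2 →ₗ[Rᵐᵒᵖ] M, (∀ x, d2 x = 0 → φ x = 0) →
          ∃ χ : P1 →ₗ[Rᵐᵒᵖ] M, χ ∘ₗ d2 = φ)
    (f : M →ₗ[Rᵐᵒᵖ] N) (g : N →ₗ[Rᵐᵒᵖ] L) (hf : Function.Injective f)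
    (hg : Function.Surjective g) (hfg : LinearMap.range f = LinearMap.ker g)
    (hN : IsMininjective R N) (h : ↥I →ₗ[Rᵐᵒᵖ] L) :
    ∃ k : R →ₗ[Rᵐᵒᵖ] L, ∀ x : ↥I, k ↑x = h x := by
  have hd1 : ∀ z, e z = 0 → ∃ p, d1 p = z := fun z hz => by
    have : z ∈ LinearMap.range d1 := h1 ▸ hz
    exact this
  have hd2 : ∀ p, d1 p = 0 → ∃ x, d2 x = p := fun z hz => by
    have : z ∈ LinearMap.range d2 := h2 ▸ hz
    exact this
  have hed : ∀ p, e (d1 p) = 0 := fun p => by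
    have : d1 p ∈ LinearMap.ker e := h1 ▸ ⟨p, rfl⟩
    exact this
  have hdd : ∀ x, d1 (d2 x) = 0 := fun p => by
    have : d2 p ∈ LinearMap.ker d1 := h2 ▸ ⟨p, rfl⟩
    exact this
  have hgf : ∀ m, g (f m) = 0 := fun p => by
    have : f p ∈ LinearMap.ker g := hfg ▸ ⟨p, rfl⟩
    exact this
  let td : P1 →ₗ[Rᵐᵒᵖ] I := (t ∘ₗ d1).codRestrict I (fun q => by
    have := (ht (d1 q)).trans (hed q)
    simpa using this)
  obtain ⟨ψ, hψ⟩ := Module.projective_lifting_property g (h ∘ₗ td) hg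
  have hψ' : ∀ q, g (ψ q) = h (td q) := fun q => (LinearMap.congr_fun hψ q)
  have htd : ∀ q, d1 q = 0 → td q = 0 := fun q hq => Subtype.ext (by
    change t (d1 q) = 0
    rw [hq, map_zero])
  let E : M ≃ₗ[Rᵐᵒᵖ] LinearMap.ker g := LinearEquiv.ofBijective
    (f.codRestrict _ hgf) ⟨fun a b hab => hf (congrArg Subtype.val hab), by
      rintro ⟨y, hy⟩
      have hy' : y ∈ LinearMap.range f := hfg ▸ hy
      obtain ⟨m, rfl⟩ := hy'
      exact ⟨m, rfl⟩⟩
  have hE : ∀ y : LinearMap.ker g, f (E.symm y) = y := fun y =>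
    congrArg Subtype.val (E.apply_symm_apply y)
  let φ : P2 →ₗ[Rᵐᵒᵖ] M := E.symm.toLinearMap ∘ₗ (ψ ∘ₗ d2).codRestrict (LinearMap.ker g)
    (fun x => by simp [hψ', htd _ (hdd x)])
  have hφ : ∀ x, f (φ x) = ψ (d2 x) := fun x => hE _
  obtain ⟨χ, hχ⟩ := hext φ (fun x hx => hf (by rw [hφ, hx]; simp))
  have hχ' : ∀ x, χ (d2 x) = φ x := fun x => (LinearMap.congr_fun hχ x)
  let θ : P1 →ₗ[Rᵐᵒᵖ] N := ψ - f ∘ₗ χ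
  have hθ : ∀ q, d1 q = 0 → θ q = 0 := by
    intro q hq
    obtain ⟨x, rfl⟩ := hd2 q hq
    simp [θ, hχ', hφ]
  have hgθ : ∀ q, g (θ q) = h (td q) := by
    intro q
    simp [θ, hgf, hψ']
  let θ' : LinearMap.range d1 →ₗ[Rᵐᵒᵖ] N :=
    ((LinearMap.ker d1).liftQ θ (fun q hq => hθ q hq)) ∘ₗ d1.quotKerEquivRange.symm.toLinearMap
  have hθ' : ∀ q (hq : d1 q ∈ LinearMap.range d1), θ' ⟨d1 q, hq⟩ = θ q := by
    intro q hq
    change ((LinearMap.ker d1).liftQ θ (fun q hq => hθ q hq)) (d1.quotKerEquivRange.symm ⟨d1 q, hq⟩) = θ q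
    rw [LinearMap.quotKerEquivRange_symm_apply_image]
    rfl
  let ri : I →ₗ[Rᵐᵒᵖ] LinearMap.range d1 := (r ∘ₗ I.subtype).codRestrict _ (fun a => by
    rw [h1]
    simp [hr])
  obtain ⟨k, hk⟩ := hN I hI (θ' ∘ₗ ri)
  let w : R →ₗ[Rᵐᵒᵖ] I := (LinearMap.id - t ∘ₗ r).codRestrict I (fun x => by
    have h5 : I.mkQ (x - t (r x)) = 0 := by rw [map_sub, ht, hr, sub_self]
    exact (Submodule.Quotient.mk_eq_zero I).1 h5)
  refine ⟨g ∘ₗ k + h ∘ₗ w, fun a => ?_⟩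
  change g (k a) + h (w a) = h a
  rw [hk]
  obtain ⟨q, hq⟩ := (ri a).2
  have h6 : θ' (ri a) = θ q := by
    rw [← hθ' q ⟨q, rfl⟩]
    exact congrArg _ (Subtype.ext hq.symm)
  change g (θ' (ri a)) + _ = _
  rw [h6, hgθ, ← map_add]
  congr 1
  apply Subtype.ext
  have h7 : d1 q = r a := hq
  change t (d1 q) + (↑a - t (r a)) = ↑a
  rw [h7]
  abel

open CategoryTheory in
lemma minAux_embed (R : Type u) [Ring R] (X : Type u) [AddCommGroup X] [Module Rᵐᵒᵖ X] :
    ∃ (E : ModuleCat.{u} Rᵐᵒᵖ) (_ : Module.Injective Rᵐᵒᵖ E) (i : X →ₗ[Rᵐᵒᵖ] E),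
      Function.Injective i := by
  let Y := ModuleCat.of Rᵐᵒᵖ X
  have hinj : CategoryTheory.Injective (Injective.under Y) := inferInstance
  have : Module.Injective Rᵐᵒᵖ (Injective.under Y : ModuleCat.{u} Rᵐᵒᵖ) :=
    Module.injective_module_of_injective_object (inj := hinj) _ _
  exact ⟨Injective.under Y, this, (Injective.ι Y).hom,
    (ModuleCat.mono_iff_injective _).1 inferInstance⟩

lemma minAux_ca (R : Type u) [Ring R]
    (hc : ∀ (M N L : Type u) [AddCommGroup M] [AddCommGroup N] [AddCommGroup L]
          [Module Rᵐᵒᵖ M] [Module Rᵐᵒᵖ N] [Module Rᵐᵒᵖ L]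
          (f : M →ₗ[Rᵐᵒᵖ] N) (g : N →ₗ[Rᵐᵒᵖ] L),
          Function.Injective f → Function.Surjective g →
            LinearMap.range f = LinearMap.ker g →
              IsMininjective R M → IsMininjective R N → IsMininjective R L) :
    RightStronglyMinCoherent R := by
  intro I hI X _ _ p hp hker
  obtain ⟨E, hE, i, hi⟩ := minAux_embed R X
  have hEm : IsMininjective R E := by
    intro J _ f
    obtain ⟨g, hg⟩ := hE.out J.subtype J.injective_subtype f
    exact ⟨g, hg⟩
  let K : Submodule Rᵐᵒᵖ E := (LinearMap.ker p).map i
  have hL : IsMininjective R (E ⧸ K) := hc (LinearMap.ker p) E (E ⧸ K)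
    (i ∘ₗ (LinearMap.ker p).subtype) K.mkQ (hi.comp Subtype.val_injective) K.mkQ_surjective
    (by rw [LinearMap.range_comp, Submodule.range_subtype, Submodule.ker_mkQ]) hker hEm
  let b : I →ₗ[Rᵐᵒᵖ] (E ⧸ K) := ((LinearMap.ker p).mapQ K i (Submodule.le_comap_map _ _)) ∘ₗ
    (p.quotKerEquivOfSurjective hp).symm.toLinearMap
  have hb : ∀ x, b (p x) = K.mkQ (i x) := by
    intro x
    have : (p.quotKerEquivOfSurjective hp).symm (p x) = (LinearMap.ker p).mkQ x := by
      rw [LinearEquiv.symm_apply_eq]; rfl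
    change ((LinearMap.ker p).mapQ K i (Submodule.le_comap_map _ _))
      ((p.quotKerEquivOfSurjective hp).symm (p x)) = _
    rw [this]; rfl
  obtain ⟨g, hg⟩ := hL I hI b
  have := minAux_projective R
  obtain ⟨l, hl⟩ := Module.projective_lifting_property K.mkQ g K.mkQ_surjective
  have key : ∀ a : I, ∃ x, p x = a ∧ i x = l a := by
    intro a
    obtain ⟨x, hx⟩ := hp a
    have h1 : K.mkQ (l a) = K.mkQ (i x) := by
      rw [← hb, hx, ← hg]
      exact (LinearMap.congr_fun hl a)
    obtain ⟨y, hy, hyx⟩ := (Submodule.Quotient.eq K).1 h1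
    refine ⟨x + y, ?_, ?_⟩
    · have : p y = 0 := hy
      rw [map_add, hx, this, add_zero]
    · rw [map_add, hyx]; abel
  choose s hs1 hs2 using key
  refine ⟨{ toFun := s, map_add' := ?_, map_smul' := ?_ }, ?_⟩
  · intro a b
    apply hi
    simp [hs2]
  · intro c a
    apply hi
    simp only [map_smul, hs2, RingHom.id_apply]
    exact l.map_smul c a
  · ext a
    exact congrArg Subtype.val (hs1 a)


open CategoryTheory in
/-- The following are equivalent: (a) every minimal right ideal of `R` is
min-projective; (b) `Ext²(R/I, M) = 0` for every mininjective right module `M` and every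
minimal right ideal `I`; (c) quotients of mininjective right modules by mininjective
submodules are mininjective. -/
theorem rightStronglyMinCoherent_tfae (R : Type u) [Ring R] :
    List.TFAE
      [ RightStronglyMinCoherent R,
        ∀ (M : Type u) [AddCommGroup M] [Module Rᵐᵒᵖ M], IsMininjective R M →
          ∀ I : Submodule Rᵐᵒᵖ R, IsAtom I →
            Subsingleton (((Ext ℤ (ModuleCat.{u} Rᵐᵒᵖ) 2).obj
              (Opposite.op (ModuleCat.of Rᵐᵒᵖ (R ⧸ I)))).obj (ModuleCat.of Rᵐᵒᵖ M)),
        ∀ (M N L : Type u) [AddCommGroup M] [AddCommGroup N] [AddCommGroup L]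
          [Module Rᵐᵒᵖ M] [Module Rᵐᵒᵖ N] [Module Rᵐᵒᵖ L]
          (f : M →ₗ[Rᵐᵒᵖ] N) (g : N →ₗ[Rᵐᵒᵖ] L),
          Function.Injective f → Function.Surjective g →
            LinearMap.range f = LinearMap.ker g →
              IsMininjective R M → IsMininjective R N → IsMininjective R L ] := by
  have := minAux_projective R
  tfae_have 1 → 2 := by
    intro ha M _ _ hM I hI
    obtain ⟨P0, P1, P2, _, _, e, d1, d2, he, h1, h2, h3⟩ := minAux_resolution R (R ⧸ I)
    obtain ⟨r, hr⟩ := Module.projective_lifting_property e I.mkQ he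
    obtain ⟨t, ht⟩ := Module.projective_lifting_property I.mkQ e I.mkQ_surjective
    exact (h3 M).2 (fun φ hφ => minAux_ab R I (ha I hI) P0 P1 P2 M e d1 d2 r t
      (fun x => (LinearMap.congr_fun hr x)) (fun x => (LinearMap.congr_fun ht x)) h1 h2 hM φ hφ)
  tfae_have 2 → 3 := by
    intro hb M N L _ _ _ _ _ _ f g hf hg hfg hM hN I hI h
    obtain ⟨P0, P1, P2, _, _, e, d1, d2, he, h1, h2, h3⟩ := minAux_resolution R (R ⧸ I)
    obtain ⟨r, hr⟩ := Module.projective_lifting_property e I.mkQ he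
    obtain ⟨t, ht⟩ := Module.projective_lifting_property I.mkQ e I.mkQ_surjective
    exact minAux_bc R I hI P0 P1 P2 M N L e d1 d2 r t
      (fun x => (LinearMap.congr_fun hr x)) (fun x => (LinearMap.congr_fun ht x)) h1 h2 ((h3 M).1 (hb M hM I hI))
      f g hf hg hfg hN h
  tfae_have 3 → 1 := fun hc => minAux_ca R hc
  tfae_finish
end

section
/- Let R be a ring. Then every mininjective right R-module is injective if and only if R is right Noetherian and every min-flat left R-module is projective. -/
universe u v w v'

open MulOpposite

section MinFlat
variable (R : Type u) [Ring R] (M : Type v) [AddCommGroup M] [Module R M]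

/-- The balancing relations inside `I ⊗_ℤ M` defining the tensor product `I ⊗_R M`
of the right ideal `I` with the left module `M` over the (possibly noncommutative)
ring `R`. -/
def minflatBalance (I : Submodule Rᵐᵒᵖ R) : Submodule ℤ (TensorProduct ℤ ↥I M) :=
  Submodule.span ℤ {t | ∃ (x : ↥I) (r : R) (m : M),
    t = (MulOpposite.op r • x) ⊗ₜ[ℤ] m - x ⊗ₜ[ℤ] (r • m)}

/-- The additive map `I ⊗_ℤ M → M` sending `x ⊗ m` to `x • m`. -/
noncomputable def minflatAux (I : Submodule Rᵐᵒᵖ R) : TensorProduct ℤ ↥I M →+ M :=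
  TensorProduct.liftAddHom
    { toFun := fun x => DistribMulAction.toAddMonoidHom M (x : R)
      map_zero' := by ext m; simp
      map_add' := fun x y => by ext m; exact add_smul (x : R) (y : R) m }
    (fun n x m => by
      show ((n • x : ↥I) : R) • m = (x : R) • (n • m)
      have hcoe : ((n • x : ↥I) : R) = n • (x : R) := rfl
      rw [hcoe, zsmul_eq_mul, mul_smul, Int.cast_smul_eq_zsmul, smul_comm])

lemma minflatBalance_le_ker (I : Submodule Rᵐᵒᵖ R) :
    minflatBalance R M I ≤ LinearMap.ker (minflatAux R M I).toIntLinearMap := by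
  rw [minflatBalance, Submodule.span_le]
  rintro t ⟨x, r, m, rfl⟩
  simp only [SetLike.mem_coe, LinearMap.mem_ker, AddMonoidHom.coe_toIntLinearMap, map_sub]
  have h1 : minflatAux R M I ((MulOpposite.op r • x) ⊗ₜ[ℤ] m)
      = ((MulOpposite.op r • x : ↥I) : R) • m := by
    simp [minflatAux, TensorProduct.liftAddHom_tmul]
  have h2 : minflatAux R M I (x ⊗ₜ[ℤ] (r • m)) = (x : R) • (r • m) := by
    simp [minflatAux, TensorProduct.liftAddHom_tmul]
  rw [h1, h2, Submodule.coe_smul, MulOpposite.smul_eq_mul_unop, MulOpposite.unop_op, mul_smul,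
    sub_self]

/-- A left `R`-module `M` is min-flat if for every minimal right ideal `I` of `R`
the canonical map `I ⊗_R M → M` is injective. -/
def IsMinFlat : Prop :=
  ∀ I : Submodule Rᵐᵒᵖ R, IsAtom I →
    Function.Injective
      (Submodule.liftQ (minflatBalance R M I) (minflatAux R M I).toIntLinearMap
        (minflatBalance_le_ker R M I))

end MinFlat

/-! ### Character modules -/

lemma char_factor {A : Type v} {C : Type w} [AddCommGroup A] [AddCommGroup C]
    (φ : A →+ C) (χ : A →+ AddCircle (1 : ℚ)) (h : ∀ a, φ a = 0 → χ a = 0) :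
    ∃ ψ : C →+ AddCircle (1 : ℚ), ∀ a, ψ (φ a) = χ a := by
  let e : A ⧸ φ.ker →+ C := QuotientAddGroup.kerLift φ
  have he : Function.Injective e := QuotientAddGroup.kerLift_injective φ
  let χ' : A ⧸ φ.ker →+ AddCircle (1 : ℚ) :=
    QuotientAddGroup.lift φ.ker χ (fun a ha => h a ha)
  obtain ⟨ψ, hψ⟩ := CharacterModule.dual_surjective_of_injective (R := ℤ)
    e.toIntLinearMap he χ'
  refine ⟨ψ, fun a => ?_⟩
  have := DFunLike.congr_fun hψ (QuotientAddGroup.mk a)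
  exact this

lemma char_sep {A : Type v} [AddCommGroup A] (B : AddSubgroup A) (a : A) (ha : a ∉ B) :
    ∃ χ : A →+ AddCircle (1 : ℚ), (∀ b ∈ B, χ b = 0) ∧ χ a ≠ 0 := by
  have hne : (QuotientAddGroup.mk' B) a ≠ 0 := by
    intro h
    exact ha ((QuotientAddGroup.eq_zero_iff a).1 h)
  obtain ⟨c, hc⟩ := CharacterModule.exists_character_apply_ne_zero_of_ne_zero hne
  let c' : (A ⧸ B) →+ AddCircle (1 : ℚ) := c
  refine ⟨c'.comp (QuotientAddGroup.mk' B), fun b hb => ?_, hc⟩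
  have : (QuotientAddGroup.mk' B) b = 0 := (QuotientAddGroup.eq_zero_iff b).2 hb
  simp only [AddMonoidHom.comp_apply, this, map_zero]

/-- Character module of a right module, as a left module. -/
def LDual (R : Type u) [Ring R] (M : Type v) [AddCommGroup M] [Module Rᵐᵒᵖ M] : Type v :=
  M →+ AddCircle (1 : ℚ)

namespace LDual
variable (R : Type u) [Ring R] (M : Type v) [AddCommGroup M] [Module Rᵐᵒᵖ M]

noncomputable instance : AddCommGroup (LDual R M) :=
  inferInstanceAs (AddCommGroup (M →+ AddCircle (1 : ℚ)))

/-- evaluation -/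
noncomputable def ev : LDual R M →+ (M →+ AddCircle (1 : ℚ)) := AddMonoidHom.id _

noncomputable instance : Module R (LDual R M) where
  smul r ν := AddMonoidHom.comp (ev R M ν) (DistribSMul.toAddMonoidHom M (op r))
  one_smul ν := AddMonoidHom.ext fun m => by
    show ev R M ν (op (1 : R) • m) = ev R M ν m
    simp
  mul_smul r s ν := AddMonoidHom.ext fun m => by
    show ev R M ν (op (r * s) • m) = ev R M ν (op s • op r • m)
    rw [op_mul, mul_smul]
  smul_zero r := AddMonoidHom.ext fun m => rfl
  smul_add r ν μ := AddMonoidHom.ext fun m => rfl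
  add_smul r s ν := AddMonoidHom.ext fun m => by
    show ev R M ν (op (r + s) • m) = ev R M ν (op r • m) + ev R M ν (op s • m)
    rw [op_add, add_smul, map_add]
  zero_smul ν := AddMonoidHom.ext fun m => by
    show ev R M ν (op (0 : R) • m) = 0
    simp

lemma ev_smul (r : R) (ν : LDual R M) (m : M) :
    ev R M (r • ν) m = ev R M ν (op r • m) := rfl

lemma ev_ext {ν μ : LDual R M} (h : ∀ m, ev R M ν m = ev R M μ m) : ν = μ :=
  AddMonoidHom.ext h

end LDual

/-- Character module of a left module, as a right module. -/
def RDual (R : Type u) [Ring R] (M : Type v) [AddCommGroup M] [Module R M] : Type v :=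
  M →+ AddCircle (1 : ℚ)

namespace RDual
variable (R : Type u) [Ring R] (M : Type v) [AddCommGroup M] [Module R M]

noncomputable instance : AddCommGroup (RDual R M) :=
  inferInstanceAs (AddCommGroup (M →+ AddCircle (1 : ℚ)))

/-- evaluation -/
noncomputable def ev : RDual R M →+ (M →+ AddCircle (1 : ℚ)) := AddMonoidHom.id _

noncomputable instance : Module Rᵐᵒᵖ (RDual R M) where
  smul r ν := AddMonoidHom.comp (ev R M ν) (DistribSMul.toAddMonoidHom M (unop r))
  one_smul ν := AddMonoidHom.ext fun m => by
    show ev R M ν (unop (1 : Rᵐᵒᵖ) • m) = ev R M ν m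
    simp
  mul_smul r s ν := AddMonoidHom.ext fun m => by
    show ev R M ν (unop (r * s) • m) = ev R M ν (unop s • unop r • m)
    rw [unop_mul, mul_smul]
  smul_zero r := AddMonoidHom.ext fun m => rfl
  smul_add r ν μ := AddMonoidHom.ext fun m => rfl
  add_smul r s ν := AddMonoidHom.ext fun m => by
    show ev R M ν (unop (r + s) • m) = ev R M ν (unop r • m) + ev R M ν (unop s • m)
    rw [unop_add, add_smul, map_add]
  zero_smul ν := AddMonoidHom.ext fun m => by
    show ev R M ν (unop (0 : Rᵐᵒᵖ) • m) = 0
    simp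

lemma ev_smul (r : Rᵐᵒᵖ) (ν : RDual R M) (m : M) :
    ev R M (r • ν) m = ev R M ν (unop r • m) := rfl

lemma ev_ext {ν μ : RDual R M} (h : ∀ m, ev R M ν m = ev R M μ m) : ν = μ :=
  AddMonoidHom.ext h

end RDual

section General
variable {R : Type u} [Ring R]

lemma minflatAux_tmul (M : Type v) [AddCommGroup M] [Module R M] (I : Submodule Rᵐᵒᵖ R)
    (x : I) (m : M) : minflatAux R M I (x ⊗ₜ[ℤ] m) = (x : R) • m := by
  simp [minflatAux, TensorProduct.liftAddHom_tmul]

lemma atom_gen {I : Submodule Rᵐᵒᵖ R} (hI : IsAtom I) :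
    ∃ a : I, a ≠ 0 ∧ ∀ x : I, ∃ r : R, x = op r • a := by
  obtain ⟨a, haI, ha⟩ := Submodule.exists_mem_ne_zero_of_ne_bot hI.1
  refine ⟨⟨a, haI⟩, fun h => ha (congrArg Subtype.val h), fun x => ?_⟩
  have h1 : Submodule.span Rᵐᵒᵖ {a} = I := by
    have h2 : Submodule.span Rᵐᵒᵖ {a} ≤ I := (Submodule.span_singleton_le_iff_mem _ _).2 haI
    rcases hI.le_iff.1 h2 with h | h
    · exact absurd (Submodule.span_singleton_eq_bot.1 h) ha
    · exact h
  have hx : (x : R) ∈ Submodule.span Rᵐᵒᵖ {a} := h1 ▸ x.2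
  obtain ⟨r, hr⟩ := Submodule.mem_span_singleton.1 hx
  exact ⟨unop r, Subtype.ext hr.symm⟩

/-! ### The direction from min-flat to mininjective -/

lemma minflat_LDual (hN : IsNoetherian Rᵐᵒᵖ R) (M : Type v) [AddCommGroup M] [Module Rᵐᵒᵖ M]
    (hM : IsMininjective R M) : IsMinFlat R (LDual R M) := by
  intro I hI
  obtain ⟨a, ha0, ha⟩ := atom_gen hI
  rw [injective_iff_map_eq_zero]
  intro t ht
  obtain ⟨t, rfl⟩ := Submodule.mkQ_surjective _ t
  have key : ∀ t : TensorProduct ℤ I (LDual R M), ∃ ν : LDual R M,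
      (minflatBalance R (LDual R M) I).mkQ t
        = (minflatBalance R (LDual R M) I).mkQ (a ⊗ₜ[ℤ] ν) := by
    intro t
    induction t using TensorProduct.induction_on with
    | zero => exact ⟨0, by simp⟩
    | tmul x ν =>
      obtain ⟨r, rfl⟩ := ha x
      refine ⟨r • ν, ?_⟩
      rw [← sub_eq_zero, ← map_sub]
      exact (Submodule.Quotient.mk_eq_zero _).2 (Submodule.subset_span ⟨a, r, ν, rfl⟩)
    | add x y hx hy =>
      obtain ⟨ν, hν⟩ := hx
      obtain ⟨μ, hμ⟩ := hy
      exact ⟨ν + μ, by rw [map_add, hν, hμ, ← map_add, TensorProduct.tmul_add]⟩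
  obtain ⟨ν, hν⟩ := key t
  rw [hν] at ht ⊢
  have haν : (a : R) • ν = 0 := by
    rw [← minflatAux_tmul (R := R) (LDual R M) I a ν]
    exact ht
  -- the right annihilator of `a`
  let l : R →ₗ[Rᵐᵒᵖ] R :=
    { toFun := fun r => (a : R) * r
      map_add' := fun x y => mul_add _ _ _
      map_smul' := fun c x => by simp [MulOpposite.smul_eq_mul_unop, mul_assoc] }
  obtain ⟨n, b, hb⟩ := Submodule.fg_iff_exists_fin_generating_family.1
    (hN.noetherian (LinearMap.ker l))
  have hb0 : ∀ i, (a : R) * b i = 0 := fun i => by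
    have : b i ∈ LinearMap.ker l := hb ▸ Submodule.subset_span ⟨i, rfl⟩
    exact this
  let φ : M →+ (Fin n → M) :=
    { toFun := fun m i => op (b i) • m
      map_zero' := by ext; simp
      map_add' := fun x y => by ext; simp }
  obtain ⟨ψ, hψ⟩ := char_factor φ (LDual.ev R M ν) (by
    intro m hm
    have hm' : ∀ i, op (b i) • m = 0 := fun i => congrFun hm i
    -- `m` is annihilated by the whole annihilator
    have hann : ∀ r : R, (a : R) * r = 0 → op r • m = 0 := by
      intro r hr
      have hr' : r ∈ Submodule.span Rᵐᵒᵖ (Set.range b) := hb ▸ (show r ∈ LinearMap.ker l from hr)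
      induction hr' using Submodule.span_induction with
      | mem x hx => obtain ⟨i, rfl⟩ := hx; exact hm' i
      | zero => simp
      | add x y hx hy h1 h2 =>
        have hx' : (a : R) * x = 0 := by
          have : x ∈ LinearMap.ker l := hb ▸ hx
          exact this
        have hy' : (a : R) * y = 0 := by
          have : y ∈ LinearMap.ker l := hb ▸ hy
          exact this
        rw [op_add, add_smul, h1 hx', h2 hy', add_zero]
      | smul c x hx h1 =>
        have hx' : (a : R) * x = 0 := by
          have : x ∈ LinearMap.ker l := hb ▸ hx
          exact this
        have : op (c • x) = c * op x := by
          rw [MulOpposite.smul_eq_mul_unop, op_mul, op_unop]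
        rw [this, mul_smul, h1 hx', smul_zero]
    choose ρ hρ using ha
    have hwd : ∀ r s : R, op r • a = op s • a → op r • m = op s • m := by
      intro r s h
      have h' : (a : R) * r = a * s := by
        have := congrArg Subtype.val h
        simpa [MulOpposite.smul_eq_mul_unop] using this
      rw [← sub_eq_zero, ← sub_smul, ← op_sub]
      exact hann _ (by rw [mul_sub, h', sub_self])
    let f : I →ₗ[Rᵐᵒᵖ] M :=
      { toFun := fun x => op (ρ x) • m
        map_add' := fun x y => by
          rw [← add_smul, ← op_add]
          apply hwd
          rw [← hρ, op_add, add_smul, ← hρ, ← hρ]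
        map_smul' := fun c x => by
          show op (ρ (c • x)) • m = c • op (ρ x) • m
          rw [← mul_smul]
          have : c * op (ρ x) = op (ρ x * unop c) := by rw [op_mul, op_unop]
          rw [this]
          apply hwd
          rw [← hρ, ← this, mul_smul, ← hρ] }
    obtain ⟨g, hg⟩ := hM I hI f
    have h1 : g a = m := by
      rw [hg]
      show op (ρ a) • m = m
      have := hwd (ρ a) 1 (by rw [← hρ]; simp)
      rw [this]; simp
    have h2 : g a = op (a : R) • g 1 := by
      rw [← map_smul]; simp [MulOpposite.smul_eq_mul_unop]
    rw [← h1, h2, ← LDual.ev_smul, haν]; rfl)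
  -- components of ψ
  let νi : Fin n → LDual R M := fun i => ψ.comp (AddMonoidHom.single (fun _ => M) i)
  have hsum : ν = ∑ i, b i • νi i := by
    apply LDual.ev_ext
    intro m
    rw [← hψ m, map_sum, AddMonoidHom.finsetSum_apply]
    simp only [LDual.ev_smul]
    have : φ m = ∑ i, Pi.single i (op (b i) • m) := by
      rw [Finset.univ_sum_single (fun i => op (b i) • m)]; rfl
    rw [this, map_sum]
    rfl
  rw [hsum, TensorProduct.tmul_sum, map_sum]
  refine Finset.sum_eq_zero fun i _ => ?_
  have h1 : (minflatBalance R (LDual R M) I).mkQ (a ⊗ₜ[ℤ] (b i • νi i))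
      = (minflatBalance R (LDual R M) I).mkQ ((op (b i) • a) ⊗ₜ[ℤ] νi i) := by
    symm
    rw [← sub_eq_zero, ← map_sub]
    exact (Submodule.Quotient.mk_eq_zero _).2 (Submodule.subset_span ⟨a, b i, νi i, rfl⟩)
  have h2 : op (b i) • a = 0 := Subtype.ext (by
    simpa [MulOpposite.smul_eq_mul_unop] using hb0 i)
  rw [h1, h2, TensorProduct.zero_tmul, map_zero]

/-- `R` and `Rᵐᵒᵖ` are isomorphic as right modules. -/
def opEquivR (R : Type u) [Ring R] : R ≃ₗ[Rᵐᵒᵖ] Rᵐᵒᵖ :=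
  { toFun := op
    invFun := unop
    left_inv := fun _ => rfl
    right_inv := fun _ => rfl
    map_add' := fun _ _ => rfl
    map_smul' := fun _ _ => rfl }

lemma injective_of_projective_LDual (hN : IsNoetherian Rᵐᵒᵖ R) (M : Type u) [AddCommGroup M]
    [Module Rᵐᵒᵖ M] (hP : Module.Projective R (LDual R M)) : Module.Injective Rᵐᵒᵖ M := by
  have hN' : IsNoetherian Rᵐᵒᵖ Rᵐᵒᵖ := isNoetherian_of_linearEquiv (opEquivR R)
  apply Module.Baer.injective
  intro I g
  obtain ⟨n, a, ha⟩ := Submodule.fg_iff_exists_fin_generating_family.1 (hN'.noetherian I)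
  have haI : ∀ i, a i ∈ I := fun i => ha ▸ Submodule.subset_span ⟨i, rfl⟩
  by_cases hm : ∃ m : M, ∀ i, g ⟨a i, haI i⟩ = a i • m
  · obtain ⟨m, hm⟩ := hm
    refine ⟨LinearMap.toSpanSingleton Rᵐᵒᵖ M m, fun x hx => ?_⟩
    have hx' : x ∈ Submodule.span Rᵐᵒᵖ (Set.range a) := ha ▸ hx
    have : ∀ x (h : x ∈ Submodule.span Rᵐᵒᵖ (Set.range a)), ∀ hx : x ∈ I,
        x • m = g ⟨x, hx⟩ := by
      intro x h
      induction h using Submodule.span_induction with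
      | mem x hx => obtain ⟨i, rfl⟩ := hx; intro _; exact (hm i).symm
      | zero =>
        intro hx
        rw [zero_smul]; exact (map_zero g).symm
      | add x y hx hy h1 h2 =>
        intro _
        rw [add_smul, h1 (ha ▸ hx), h2 (ha ▸ hy), ← map_add]; rfl
      | smul c x hx h1 =>
        intro _
        rw [smul_assoc, h1 (ha ▸ hx), ← map_smul]; rfl
    exact this x hx' hx
  · exfalso
    let B : M →+ (Fin n → M) :=
      { toFun := fun m i => a i • m
        map_zero' := by ext; simp
        map_add' := fun x y => by ext; simp }
    obtain ⟨χ, hχ, hne⟩ := char_sep B.range (fun i => g ⟨a i, haI i⟩) (by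
      rintro ⟨m, h⟩
      exact hm ⟨m, fun i => (congrFun h i).symm⟩)
    let νi : Fin n → LDual R M := fun i => χ.comp (AddMonoidHom.single (fun _ => M) i)
    have hχν : ∀ v : Fin n → M, χ v = ∑ i, LDual.ev R M (νi i) (v i) := by
      intro v
      conv_lhs => rw [← Finset.univ_sum_single v]
      rw [map_sum]; rfl
    have hrel : ∑ i, unop (a i) • νi i = 0 := by
      apply LDual.ev_ext
      intro m
      rw [map_sum, AddMonoidHom.finsetSum_apply]
      simp only [LDual.ev_smul, op_unop]
      have := hχ (B m) ⟨m, rfl⟩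
      rw [hχν] at this
      exact this
    obtain ⟨s, hs⟩ := Module.projective_def.1 hP
    have hrel' : ∀ k, ∑ i, unop (a i) * s (νi i) k = 0 := by
      intro k
      have := congrArg (fun z => (s z) k) hrel
      simpa [map_sum, Finsupp.finsetSum_apply] using this
    apply hne
    rw [hχν]
    classical
    let T : Finset (LDual R M) := Finset.univ.biUnion fun i => (s (νi i)).support
    have hν : ∀ i, νi i = ∑ k ∈ T, s (νi i) k • k := by
      intro i
      conv_lhs => rw [← hs (νi i)]
      rw [Finsupp.linearCombination_apply]
      refine Finsupp.sum_of_support_subset _ ?_ _ (by simp)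
      exact Finset.subset_biUnion_of_mem (fun i => (s (νi i)).support) (Finset.mem_univ i)
    have h1 : ∀ i, LDual.ev R M (νi i) (g ⟨a i, haI i⟩)
        = ∑ k ∈ T, LDual.ev R M k (op (s (νi i) k) • g ⟨a i, haI i⟩) := by
      intro i
      conv_lhs => rw [hν i]
      rw [map_sum, AddMonoidHom.finsetSum_apply]
      rfl
    simp only [h1]
    rw [Finset.sum_comm]
    refine Finset.sum_eq_zero fun k _ => ?_
    rw [← map_sum]
    have h2 : ∑ i, op (s (νi i) k) • g ⟨a i, haI i⟩ = 0 := by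
      simp only [← map_smul]
      rw [← map_sum]
      have : ∑ i, op (s (νi i) k) • (⟨a i, haI i⟩ : I) = 0 := by
        apply Subtype.ext
        have h3 := congrArg op (hrel' k)
        rw [Finset.op_sum] at h3
        simpa using h3
      rw [this, map_zero]
    rw [h2, map_zero]

/-! ### The direction from mininjective to min-flat -/

lemma mininjective_RDual (M : Type v) [AddCommGroup M] [Module R M] (hM : IsMinFlat R M) :
    IsMininjective R (RDual R M) := by
  intro I hI f
  have hinj := hM I hI
  let F : TensorProduct ℤ I M →+ AddCircle (1 : ℚ) :=
    TensorProduct.liftAddHom ((RDual.ev R M).comp f.toAddMonoidHom) (fun n x m => by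
      show RDual.ev R M (f (n • x)) m = RDual.ev R M (f x) (n • m)
      rw [map_zsmul, map_zsmul, map_zsmul]; rfl)
  have hF : ∀ x m, F (x ⊗ₜ[ℤ] m) = RDual.ev R M (f x) m := fun x m => by
    simp [F, TensorProduct.liftAddHom_tmul]
  have hbal : minflatBalance R M I ≤ LinearMap.ker F.toIntLinearMap := by
    rw [minflatBalance, Submodule.span_le]
    rintro t ⟨x, r, m, rfl⟩
    simp only [SetLike.mem_coe, LinearMap.mem_ker, AddMonoidHom.coe_toIntLinearMap, map_sub, hF,
      map_smul, RDual.ev_smul, unop_op, sub_self]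
  obtain ⟨c, hc⟩ := char_factor (minflatAux R M I) F (by
    intro t ht
    have : (minflatBalance R M I).mkQ t = 0 := hinj (by
      rw [map_zero]; exact ht)
    exact hbal ((Submodule.Quotient.mk_eq_zero _).1 this))
  let c' : RDual R M := c
  refine ⟨(LinearMap.toSpanSingleton Rᵐᵒᵖ _ c').comp (opEquivR R).toLinearMap, fun x => ?_⟩
  apply RDual.ev_ext
  intro m
  show c ((x : R) • m) = _
  rw [← hF, ← hc, minflatAux_tmul]

lemma inter_of_injective_RDual {F : Type v} [AddCommGroup F] [Module R F] (J : Ideal R)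
    [J.IsTwoSided] (K : Submodule R F) (hinj : Module.Baer Rᵐᵒᵖ (RDual R (F ⧸ K))) :
    K ⊓ J • ⊤ ≤ J • K := by
  rintro y ⟨hyK, hyJ⟩
  by_contra hy
  obtain ⟨χ, hχ, hne⟩ := char_sep (J • K).toAddSubgroup y hy
  let Jo : Ideal Rᵐᵒᵖ :=
    { carrier := {x | unop x ∈ J}
      add_mem' := fun ha hb => J.add_mem ha hb
      zero_mem' := J.zero_mem
      smul_mem' := fun c x hx => J.mul_mem_right (unop c) hx }
  let φ : Jo →ₗ[Rᵐᵒᵖ] RDual R (F ⧸ K) :=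
    { toFun := fun j => (show RDual R (F ⧸ K) from QuotientAddGroup.lift K.toAddSubgroup
          (χ.comp (DistribSMul.toAddMonoidHom F (unop (j : Rᵐᵒᵖ))))
          (fun k hk => hχ _ (Submodule.smul_mem_smul j.2 hk)))
      map_add' := fun x y => by
        apply RDual.ev_ext R (F ⧸ K)
        intro m
        obtain ⟨m, rfl⟩ := K.mkQ_surjective m
        show χ ((unop (x : Rᵐᵒᵖ) + unop (y : Rᵐᵒᵖ)) • m)
          = χ (unop (x : Rᵐᵒᵖ) • m) + χ (unop (y : Rᵐᵒᵖ) • m)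
        rw [add_smul, map_add]
      map_smul' := fun r x => by
        apply RDual.ev_ext R (F ⧸ K)
        intro m
        obtain ⟨m, rfl⟩ := K.mkQ_surjective m
        show χ ((unop (x : Rᵐᵒᵖ) * unop r) • m) = χ (unop (x : Rᵐᵒᵖ) • unop r • m)
        rw [mul_smul] }
  obtain ⟨g, hg⟩ := hinj Jo φ
  let c : RDual R (F ⧸ K) := g 1
  have h1 : ∀ j ∈ J, ∀ f : F, χ (j • f) = RDual.ev R _ c (K.mkQ (j • f)) := by
    intro j hj f
    have h2 := hg (op j) hj
    have h3 : g (op j) = op j • c := by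
      rw [← map_smul, smul_eq_mul, mul_one]
    have h4 : RDual.ev R _ (op j • c) (K.mkQ f) = RDual.ev R _ (φ ⟨op j, hj⟩) (K.mkQ f) := by
      rw [← h3, h2]
    exact h4.symm
  have h5 : χ y = RDual.ev R _ c (K.mkQ y) := by
    refine Submodule.smul_induction_on hyJ (fun r hr n _ => h1 r hr n) ?_
    intro x y hx hy
    rw [map_add, map_add, map_add, hx, hy]
  apply hne
  rw [h5, (Submodule.Quotient.mk_eq_zero K).2 hyK |> fun h => (show K.mkQ y = 0 from h), map_zero]

lemma extend_step {F : Type v} [AddCommGroup F] [Module R F] [Module.Projective R F]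
    (J : Ideal R) [J.IsTwoSided] [IsSemisimpleRing (R ⧸ J)] (K : Submodule R F)
    (hK : K ⊓ J • ⊤ ≤ J • K) {P : Type w} [AddCommGroup P] [Module R P] (h : K →ₗ[R] P) :
    ∃ g : F →ₗ[R] P, ∀ k : K, h k - g k ∈ J • (⊤ : Submodule R P) := by
  let Q := F ⧸ (J • ⊤ : Submodule R F)
  have hss : IsSemisimpleModule R Q := by
    have ht : Module.IsTorsionBySet R Q J := by
      rw [Module.isTorsionBySet_quotient_iff]
      exact fun m i hi => Submodule.smul_mem_smul hi trivial
    let _ := ht.module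
    exact (ht.semilinearMap.isSemisimpleModule_iff_of_bijective Function.bijective_id).2
      inferInstance
  let q : F →ₗ[R] Q := Submodule.mkQ _
  let A : K →ₗ[R] Q := q ∘ₗ K.subtype
  let π : P →ₗ[R] P ⧸ (J • ⊤ : Submodule R P) := Submodule.mkQ _
  have hker : LinearMap.ker A ≤ LinearMap.ker (π ∘ₗ h) := by
    intro k hk
    have hk' : (k : F) ∈ J • (⊤ : Submodule R F) := (Submodule.Quotient.mk_eq_zero _).1 hk
    have hk2 : (k : F) ∈ J • K := hK ⟨k.2, hk'⟩
    have hk3 : k ∈ J • (⊤ : Submodule R K) := by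
      have : (J • (⊤ : Submodule R K)).map K.subtype = J • K := by
        rw [Submodule.map_smul'', Submodule.map_top, Submodule.range_subtype]
      rw [← this] at hk2
      obtain ⟨k', hk', e⟩ := hk2
      have : k' = k := Subtype.ext e
      exact this ▸ hk'
    have hk4 : h k ∈ J • (⊤ : Submodule R P) := by
      have := Submodule.mem_map_of_mem (f := h) hk3
      rw [Submodule.map_smul''] at this
      exact Submodule.smul_mono le_rfl le_top this
    exact (Submodule.Quotient.mk_eq_zero _).2 hk4
  let e : (K ⧸ LinearMap.ker A) →ₗ[R] Q := (LinearMap.ker A).liftQ A le_rfl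
  have he : Function.Injective e := by
    rw [← LinearMap.ker_eq_bot]
    exact Submodule.ker_liftQ_eq_bot _ _ _ le_rfl
  obtain ⟨g0, hg0⟩ := IsSemisimpleModule.extension_property e he
    ((LinearMap.ker A).liftQ (π ∘ₗ h) hker)
  obtain ⟨g, hg⟩ := Module.projective_lifting_property π (g0 ∘ₗ q) (Submodule.mkQ_surjective _)
  refine ⟨g, fun k => ?_⟩
  rw [← Submodule.Quotient.mk_eq_zero]
  show π (h k - g k) = 0
  rw [map_sub, sub_eq_zero]
  have h1 := LinearMap.congr_fun hg (k : F)
  have h2 := LinearMap.congr_fun hg0 ((LinearMap.ker A).mkQ k)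
  exact h2.symm.trans h1.symm

lemma extend_all {F : Type v} [AddCommGroup F] [Module R F] [Module.Projective R F]
    (J : Ideal R) [J.IsTwoSided] [IsSemisimpleRing (R ⧸ J)] (K : Submodule R F)
    (hK : K ⊓ J • ⊤ ≤ J • K) {P : Type w} [AddCommGroup P] [Module R P] (h : K →ₗ[R] P) (n : ℕ) :
    ∃ g : F →ₗ[R] P, ∀ k : K, h k - g k ∈ J ^ n • (⊤ : Submodule R P) := by
  induction n with
  | zero => exact ⟨0, fun k => by simp [Submodule.pow_zero]⟩
  | succ n ih =>
    obtain ⟨g, hg⟩ := ih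
    let P' : Submodule R P := J ^ n • ⊤
    obtain ⟨g', hg'⟩ := extend_step J K hK (P := P')
      (LinearMap.codRestrict P' (h - g ∘ₗ K.subtype) hg)
    refine ⟨g + P'.subtype ∘ₗ g', fun k => ?_⟩
    have h1 := Submodule.mem_map_of_mem (f := P'.subtype) (hg' k)
    rw [Submodule.map_smul'', Submodule.map_top, Submodule.range_subtype] at h1
    have h2 : J ^ (n + 1) • (⊤ : Submodule R P) = J • P' := by
      rw [Ideal.IsTwoSided.pow_succ, Submodule.mul_smul]
    rw [h2]
    convert h1 using 1
    show h k - (g k + (g' k : P)) = (h k - g k) - (g' k : P)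
    rw [sub_sub]

lemma projective_of_injective_RDual (J : Ideal R) [J.IsTwoSided] [IsSemisimpleRing (R ⧸ J)]
    (n : ℕ) (hn : J ^ n = ⊥) (M : Type u) [AddCommGroup M] [Module R M]
    (hM : ∀ N : Type u, [AddCommGroup N] → [Module R N] → (N ≃ₗ[R] M) →
      Module.Baer Rᵐᵒᵖ (RDual R N)) : Module.Projective R M := by
  apply Module.Projective.of_lifting_property''
  intro p hp
  let K := LinearMap.ker p
  have hK : K ⊓ J • ⊤ ≤ J • K := inter_of_injective_RDual J K
    (hM _ (p.quotKerEquivOfSurjective hp))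
  obtain ⟨g, hg⟩ := extend_all J K hK (P := K) LinearMap.id n
  have hg' : ∀ k : K, g k = k := by
    intro k
    have := hg k
    rw [hn, Submodule.bot_smul, Submodule.mem_bot, sub_eq_zero] at this
    exact this.symm
  let s : (M →₀ R) →ₗ[R] (M →₀ R) := LinearMap.id - K.subtype ∘ₗ g
  have hs : LinearMap.ker p ≤ LinearMap.ker s := by
    intro k hk
    show k - (g k : M →₀ R) = 0
    rw [hg' ⟨k, hk⟩, sub_self]
  refine ⟨((LinearMap.ker p).liftQ s hs) ∘ₗ (p.quotKerEquivOfSurjective hp).symm.toLinearMap, ?_⟩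
  ext m
  obtain ⟨x, rfl⟩ := hp m
  have : (p.quotKerEquivOfSurjective hp).symm (p x) = (LinearMap.ker p).mkQ x := by
    rw [LinearEquiv.symm_apply_eq]; rfl
  simp only [LinearMap.comp_apply, LinearEquiv.coe_coe, this, LinearMap.id_apply]
  show p (x - (g x : M →₀ R)) = p x
  rw [map_sub, (LinearMap.mem_ker.1 (g x).2), sub_zero]

/-- A right Artinian ring has a nilpotent two-sided ideal with semisimple quotient. -/
lemma exists_nilpotent_semisimple (hA : IsArtinian Rᵐᵒᵖ R) :
    ∃ J : Ideal R, ∃ _ : J.IsTwoSided, IsSemisimpleRing (R ⧸ J) ∧ ∃ n : ℕ, J ^ n = ⊥ := by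
  have hA' : IsArtinianRing Rᵐᵒᵖ := isArtinian_of_linearEquiv (opEquivR R)
  obtain ⟨hss, n, hn⟩ := (isSemiprimaryRing_iff Rᵐᵒᵖ).1 inferInstance
  let T := (Rᵐᵒᵖ ⧸ Ring.jacobson Rᵐᵒᵖ)ᵐᵒᵖ
  let φ : R →+* T :=
    { toFun := fun r => op (Ideal.Quotient.mk _ (op r))
      map_one' := rfl
      map_zero' := rfl
      map_mul' := fun _ _ => rfl
      map_add' := fun _ _ => rfl }
  have hφ : Function.Surjective φ := by
    intro t
    obtain ⟨x, hx⟩ := Ideal.Quotient.mk_surjective (unop t)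
    exact ⟨unop x, by
      show op (Ideal.Quotient.mk _ (op (unop x))) = t
      rw [op_unop, hx, op_unop]⟩
  have hmem : ∀ x, x ∈ RingHom.ker φ → op x ∈ Ring.jacobson Rᵐᵒᵖ := by
    intro x hx
    rw [← Ideal.Quotient.eq_zero_iff_mem]
    exact congrArg unop hx
  refine ⟨RingHom.ker φ, inferInstance,
    (RingHom.quotientKerEquivOfSurjective hφ).symm.isSemisimpleRing, n, ?_⟩
  have hk : ∀ k : ℕ, ∀ x ∈ (RingHom.ker φ) ^ k, op x ∈ (Ring.jacobson Rᵐᵒᵖ) ^ k := by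
    intro k
    induction k with
    | zero => intro x _; simp [Submodule.pow_zero]
    | succ k ih =>
      intro x hx
      rw [Submodule.pow_succ] at hx
      rw [Ideal.IsTwoSided.pow_succ]
      refine Submodule.mul_induction_on hx ?_ ?_
      · intro a ha b hb
        rw [op_mul]
        exact Ideal.mul_mem_mul (hmem b hb) (ih a ha)
      · intro a b ha hb
        rw [op_add]; exact add_mem ha hb
  rw [eq_bot_iff]
  intro x hx
  have := hk n x hx
  rw [hn] at this
  exact op_injective this

/-! ### Noetherian and Artinian -/

lemma mininjective_of_injective (E : Type u) [AddCommGroup E] [Module Rᵐᵒᵖ E]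
    (hE : Module.Injective Rᵐᵒᵖ E) : IsMininjective R E := by
  intro I _ f
  obtain ⟨g, hg⟩ := hE.out I.subtype I.subtype_injective f
  exact ⟨g, hg⟩

lemma mininjective_directSum {ι : Type w} (E : ι → Type v) [∀ i, AddCommGroup (E i)]
    [∀ i, Module Rᵐᵒᵖ (E i)] (hE : ∀ i, IsMininjective R (E i)) :
    IsMininjective R (Π₀ i, E i) := by
  classical
  intro I hI f
  obtain ⟨a, -, ha⟩ := atom_gen hI
  choose g hg using fun i => hE i I hI ((DFinsupp.lapply (R := Rᵐᵒᵖ) i) ∘ₗ f)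
  refine ⟨∑ i ∈ (f a).support, (DFinsupp.lsingle (R := Rᵐᵒᵖ) i) ∘ₗ g i, fun x => ?_⟩
  obtain ⟨r, rfl⟩ := ha x
  rw [LinearMap.sum_apply]
  simp only [LinearMap.comp_apply, hg]
  simp only [map_smul, ← Finset.smul_sum]
  congr 1
  simp only [DFinsupp.lsingle_apply, DFinsupp.lapply_apply]
  exact DFinsupp.sum_single

lemma exists_injective_embedding (M : Type u) [AddCommGroup M] [Module Rᵐᵒᵖ M] :
    ∃ (E : Type u) (_ : AddCommGroup E) (_ : Module Rᵐᵒᵖ E) (i : M →ₗ[Rᵐᵒᵖ] E),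
      Module.Injective Rᵐᵒᵖ E ∧ Function.Injective i := by
  let X : ModuleCat.{u} Rᵐᵒᵖ := ModuleCat.of Rᵐᵒᵖ M
  let E := CategoryTheory.Injective.under X
  refine ⟨E, inferInstance, inferInstance, (CategoryTheory.Injective.ι X).hom, ?_, ?_⟩
  · have hE : CategoryTheory.Injective E := CategoryTheory.Injective.injective_under X
    exact @Module.injective_module_of_injective_object Rᵐᵒᵖ E _ _ _ hE
  · exact (ModuleCat.mono_iff_injective _).1 inferInstance

lemma noetherian_of_mininjective_injective
    (H : ∀ (M : Type u) [AddCommGroup M] [Module Rᵐᵒᵖ M],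
        IsMininjective R M → Module.Injective Rᵐᵒᵖ M) : IsNoetherian Rᵐᵒᵖ R := by
  classical
  rw [← monotone_stabilizes_iff_noetherian]
  intro I
  choose E iE1 iE2 e hE he using fun n : ℕ => exists_injective_embedding (R := R) (R ⧸ I n)
  have hinj : Module.Injective Rᵐᵒᵖ (Π₀ n, E n) :=
    H _ (mininjective_directSum E fun n => mininjective_of_injective _ (hE n))
  let U : Submodule Rᵐᵒᵖ R := ⨆ n, I n
  have hU : ∀ x ∈ U, ∃ n, x ∈ I n := fun x hx =>
    (Submodule.mem_iSup_of_directed _ I.monotone.directed_le).1 hx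
  let comp : ∀ n, R →ₗ[Rᵐᵒᵖ] E n := fun n => e n ∘ₗ (I n).mkQ
  have hcomp : ∀ n x, comp n x = 0 ↔ x ∈ I n := by
    intro n x
    show e n ((I n).mkQ x) = 0 ↔ _
    rw [map_eq_zero_iff _ (he n)]
    exact Submodule.Quotient.mk_eq_zero _
  choose N hN using hU
  let f0 : U → Π₀ n, E n := fun x =>
    DFinsupp.mk (Finset.range (N x x.2)) (fun n => comp n x)
  have hf0 : ∀ x n, f0 x n = comp n x := by
    intro x n
    simp only [f0, DFinsupp.mk_apply]
    split_ifs with h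
    · rfl
    · symm
      rw [hcomp]
      exact I.monotone (by simpa using h) (hN x x.2)
  let f : U →ₗ[Rᵐᵒᵖ] Π₀ n, E n :=
    { toFun := f0
      map_add' := fun x y => by ext n; simp [hf0]
      map_smul' := fun c x => by
        ext n
        rw [RingHom.id_apply, DFinsupp.smul_apply, hf0, hf0, Submodule.coe_smul, map_smul] }
  obtain ⟨g, hg⟩ := hinj.out U.subtype U.subtype_injective f
  obtain ⟨n, hn⟩ : ∃ n, ∀ m, n ≤ m → (g 1) m = 0 := by
    refine ⟨(g 1).support.sup id + 1, fun m hm => ?_⟩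
    by_contra h
    have h1 : m ∈ (g 1).support := by simpa using h
    have h2 := Finset.le_sup (f := id) h1
    simp only [id] at h2
    omega
  refine ⟨n, fun m hm => le_antisymm (I.monotone hm) ?_⟩
  intro x hx
  have hxU : x ∈ U := Submodule.mem_iSup_of_mem m hx
  rw [← hcomp, ← hf0 ⟨x, hxU⟩]
  have h1 : g x = f0 ⟨x, hxU⟩ := hg ⟨x, hxU⟩
  have h2 : g x = op x • g 1 := by
    rw [← map_smul]; simp [MulOpposite.smul_eq_mul_unop]
  rw [← h1, h2, DFinsupp.smul_apply, hn n le_rfl, smul_zero]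

lemma semisimple_of_no_hom
    (H : ∀ (M : Type u) [AddCommGroup M] [Module Rᵐᵒᵖ M],
        IsMininjective R M → Module.Injective Rᵐᵒᵖ M)
    (Q : Type u) [AddCommGroup Q] [Module Rᵐᵒᵖ Q]
    (hQ : ∀ I : Submodule Rᵐᵒᵖ R, IsAtom I → ∀ f : I →ₗ[Rᵐᵒᵖ] Q, f = 0) :
    IsSemisimpleModule Rᵐᵒᵖ Q := by
  rw [isSemisimpleModule_iff]
  refine ⟨fun N => ?_⟩
  have hN : Module.Injective Rᵐᵒᵖ N := by
    apply H
    intro I hI f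
    refine ⟨0, fun x => ?_⟩
    have := LinearMap.congr_fun (hQ I hI (N.subtype ∘ₗ f)) x
    exact Subtype.ext this.symm
  obtain ⟨g, hg⟩ := hN.out N.subtype N.subtype_injective LinearMap.id
  exact ⟨LinearMap.ker g, LinearMap.isCompl_of_proj hg⟩

lemma artinian_of_mininjective_injective
    (H : ∀ (M : Type u) [AddCommGroup M] [Module Rᵐᵒᵖ M],
        IsMininjective R M → Module.Injective Rᵐᵒᵖ M) : IsArtinian Rᵐᵒᵖ R := by
  have hN := noetherian_of_mininjective_injective H
  obtain ⟨X, hX, hmax⟩ := set_has_maximal_iff_noetherian.2 hN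
    {X : Submodule Rᵐᵒᵖ R | IsArtinian Rᵐᵒᵖ X} ⟨⊥, show IsArtinian Rᵐᵒᵖ _ from inferInstance⟩
  have hX' : IsArtinian Rᵐᵒᵖ X := hX
  by_cases hQ : ∀ I : Submodule Rᵐᵒᵖ R, IsAtom I → ∀ f : I →ₗ[Rᵐᵒᵖ] (R ⧸ X), f = 0
  · have hss := semisimple_of_no_hom H (R ⧸ X) hQ
    have : IsArtinian Rᵐᵒᵖ (R ⧸ X) := by
      have hn : IsNoetherian Rᵐᵒᵖ (R ⧸ X) := inferInstance
      exact ((IsSemisimpleModule.finite_tfae (R := Rᵐᵒᵖ) (M := R ⧸ X)).out 1 2).1 hn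
    exact (isArtinian_iff_submodule_quotient X).2 ⟨hX', this⟩
  · exfalso
    push Not at hQ
    obtain ⟨I, hI, f, hf⟩ := hQ
    have : IsSimpleModule Rᵐᵒᵖ I := isSimpleModule_iff_isAtom.2 hI
    let Y : Submodule Rᵐᵒᵖ R := (LinearMap.range f).comap X.mkQ
    have hXY : X ≤ Y := by
      intro x hx
      show X.mkQ x ∈ LinearMap.range f
      rw [show X.mkQ x = 0 from (Submodule.Quotient.mk_eq_zero _).2 hx]
      exact zero_mem _
    have hlt : X < Y := by
      refine lt_of_le_of_ne hXY fun h => hf ?_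
      ext i
      obtain ⟨y, hy⟩ := X.mkQ_surjective (f i)
      have : y ∈ Y := by show X.mkQ y ∈ LinearMap.range f; rw [hy]; exact ⟨i, rfl⟩
      rw [← h] at this
      rw [← hy]
      exact (Submodule.Quotient.mk_eq_zero _).2 this
    refine hmax Y ?_ hlt
    show IsArtinian Rᵐᵒᵖ Y
    have hI' : IsArtinian Rᵐᵒᵖ I := inferInstance
    have hr : IsArtinian Rᵐᵒᵖ (LinearMap.range f) :=
      isArtinian_of_surjective I f.rangeRestrict f.surjective_rangeRestrict
    let φ : X →ₗ[Rᵐᵒᵖ] Y := Submodule.inclusion hXY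
    let ψ : Y →ₗ[Rᵐᵒᵖ] (LinearMap.range f) :=
      LinearMap.codRestrict _ (X.mkQ ∘ₗ Y.subtype) (fun y => y.2)
    refine isArtinian_of_range_eq_ker φ ψ ?_
    ext y
    constructor
    · rintro ⟨x, rfl⟩
      exact Subtype.ext ((Submodule.Quotient.mk_eq_zero _).2 x.2)
    · intro hy
      have : X.mkQ (y : R) = 0 := congrArg Subtype.val hy
      exact ⟨⟨y, (Submodule.Quotient.mk_eq_zero _).1 this⟩, rfl⟩

lemma minflat_congr {M N : Type u} [AddCommGroup M] [Module R M] [AddCommGroup N] [Module R N]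
    (e : N ≃ₗ[R] M) (h : Module.Baer Rᵐᵒᵖ (RDual R M)) : Module.Baer Rᵐᵒᵖ (RDual R N) := by
  let E : RDual R M ≃ₗ[Rᵐᵒᵖ] RDual R N :=
    { toFun := fun ν => (RDual.ev R M ν).comp e.toLinearMap.toAddMonoidHom
      invFun := fun ν => (RDual.ev R N ν).comp e.symm.toLinearMap.toAddMonoidHom
      left_inv := fun ν => RDual.ev_ext R M fun m => by
        show RDual.ev R M ν (e (e.symm m)) = _
        rw [e.apply_symm_apply]
      right_inv := fun ν => RDual.ev_ext R N fun m => by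
        show RDual.ev R N ν (e.symm (e m)) = _
        rw [e.symm_apply_apply]
      map_add' := fun x y => rfl
      map_smul' := fun c x => RDual.ev_ext R N fun m => by
        show RDual.ev R M x (unop c • e m) = RDual.ev R M x (e (unop c • m))
        rw [e.map_smul] }
  exact h.of_equiv E

end General

/-- Every mininjective right `R`-module is injective iff `R` is right
Noetherian and every min-flat left `R`-module is projective. -/
theorem mininjective_injective_iff_noetherian_minflat_projective (R : Type u) [Ring R] :
    (∀ (M : Type u) [AddCommGroup M] [Module Rᵐᵒᵖ M],
        IsMininjective R M → Module.Injective Rᵐᵒᵖ M) ↔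
      (IsNoetherian Rᵐᵒᵖ R ∧
        ∀ (M : Type u) [AddCommGroup M] [Module R M],
          IsMinFlat R M → Module.Projective R M) := by
  constructor
  · intro H
    refine ⟨noetherian_of_mininjective_injective H, ?_⟩
    intro M _ _ hM
    obtain ⟨J, hJ, hss, n, hn⟩ :=
      exists_nilpotent_semisimple (artinian_of_mininjective_injective H)
    refine projective_of_injective_RDual J n hn M fun N _ _ e => ?_
    exact minflat_congr e (Module.Baer.of_injective (H _ (mininjective_RDual M hM)))
  · rintro ⟨hN, hP⟩ M _ _ hM
    exact injective_of_projective_LDual hN M (hP _ (minflat_LDual hN M hM))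
end

section
/- Let R be a ring such that every mininjective right R-module is injective. Then for every simple right R-module S, either S is isomorphic to a submodule of R, or S is isomorphic to a submodule of R/I for some minimal right ideal I of R. -/
universe u v w v'

open MulOpposite

open CategoryTheory in
theorem aux_enough (A : Type u) [Ring A] (X : Type u) [AddCommGroup X] [Module A X] :
    ∃ (Q : Type u) (_ : AddCommGroup Q) (_ : Module A Q) (i : X →ₗ[A] Q),
      Module.Injective A Q ∧ Function.Injective i := by
  obtain ⟨P⟩ := EnoughInjectives.presentation (ModuleCat.of A X)
  have h1 := P.injective
  refine ⟨P.J, inferInstance, inferInstance, P.f.hom, ?_, ?_⟩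
  · exact @Module.injective_module_of_injective_object A P.J _ _ _ h1
  · exact (ModuleCat.mono_iff_injective P.f).mp P.mono

/-- Injective hulls exist. -/
theorem aux_hull (A : Type u) [Ring A] (X : Type u) [AddCommGroup X] [Module A X] :
    ∃ (E : Type u) (_ : AddCommGroup E) (_ : Module A E) (i : X →ₗ[A] E),
      Module.Injective A E ∧ Function.Injective i ∧
      ∀ e : E, e ≠ 0 → ∃ (a : A) (x : X), a • e = i x ∧ a • e ≠ 0 := by
  obtain ⟨Q, _, _, i, hQ, hi⟩ := aux_enough A X
  let s : Set (Submodule A Q) :=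
    {E | LinearMap.range i ≤ E ∧ ∀ e ∈ E, e ≠ 0 → ∃ (a : A) (x : X), a • e = i x ∧ a • e ≠ 0}
  have h0 : LinearMap.range i ∈ s := by
    refine ⟨le_rfl, ?_⟩
    rintro _ ⟨x, rfl⟩ hx
    exact ⟨1, x, by simp, by simpa using hx⟩
  obtain ⟨E, -, ⟨hEX, hE⟩, hmax⟩ := zorn_le_nonempty₀ s (by
    intro c hc hch y hy
    refine ⟨sSup c, ⟨(hc hy).1.trans (le_sSup hy), ?_⟩, fun z hz => le_sSup hz⟩
    intro e he
    rw [Submodule.mem_sSup_of_directed ⟨y, hy⟩ hch.directedOn] at he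
    obtain ⟨z, hz, hez⟩ := he
    exact (hc hz).2 e hez) _ h0
  obtain ⟨T, hT, hTmax⟩ := zorn_le₀ {T : Submodule A Q | ∀ e ∈ T, e ∈ E → e = 0} (by
    intro c hc hch
    rcases c.eq_empty_or_nonempty with rfl | hne
    · exact ⟨⊥, by simp, by simp⟩
    · refine ⟨sSup c, ?_, fun z hz => le_sSup hz⟩
      intro e he
      rw [Submodule.mem_sSup_of_directed hne hch.directedOn] at he
      obtain ⟨z, hz, hez⟩ := he
      exact hc hz e hez)
  obtain ⟨h, hh⟩ := hQ.out (T.mkQ ∘ₗ E.subtype) (by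
    rw [injective_iff_map_eq_zero]
    rintro ⟨e, he⟩ h
    have : e ∈ T := by simpa using h
    simpa using hT e this he) E.subtype
  have hr : ∀ q, h (T.mkQ q) ∈ E := by
    have hF : LinearMap.range (h ∘ₗ T.mkQ) ∈ s := by
      constructor
      · intro e he
        exact ⟨e, hh ⟨e, hEX he⟩⟩
      · rintro _ ⟨q, rfl⟩ hq
        have hqT : q ∉ T := by
          intro hq'
          apply hq
          have : T.mkQ q = 0 := by simpa using hq'
          simp only [LinearMap.comp_apply, this, map_zero]
        have : ∃ e ∈ T ⊔ Submodule.span A {q}, e ∈ E ∧ e ≠ 0 := by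
          by_contra! hcon
          have := hTmax (y := T ⊔ Submodule.span A {q}) hcon le_sup_left
          exact hqT (this (le_sup_right (a := T) (Submodule.mem_span_singleton_self q)))
        obtain ⟨e, he, heE, he0⟩ := this
        obtain ⟨t, ht, y, hy, rfl⟩ := Submodule.mem_sup.mp he
        obtain ⟨a, rfl⟩ := Submodule.mem_span_singleton.mp hy
        obtain ⟨b, x, hbx, hb0⟩ := hE _ heE he0
        have h3 : T.mkQ t = 0 := by simpa using ht
        have h2 : h (T.mkQ (t + a • q)) = t + a • q := hh ⟨_, heE⟩
        rw [map_add, h3, zero_add, map_smul, map_smul] at h2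
        refine ⟨b * a, x, ?_, ?_⟩
        · rw [mul_smul, LinearMap.comp_apply, h2, hbx]
        · rw [mul_smul, LinearMap.comp_apply, h2]; exact hb0
    have hle : E ≤ LinearMap.range (h ∘ₗ T.mkQ) := fun e he => ⟨e, hh ⟨e, he⟩⟩
    intro q
    exact hmax hF hle ⟨q, rfl⟩
  refine ⟨E, inferInstance, inferInstance, i.codRestrict E (fun x => hEX ⟨x, rfl⟩), ⟨?_⟩, ?_, ?_⟩
  · intro M N _ _ _ _ f hf g
    obtain ⟨k, hk⟩ := hQ.out f hf (E.subtype ∘ₗ g)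
    refine ⟨(h ∘ₗ T.mkQ ∘ₗ k).codRestrict E (fun n => hr _), fun x => Subtype.ext ?_⟩
    have := hh (g x)
    simp only [LinearMap.codRestrict_apply, LinearMap.comp_apply, hk]
    exact this
  · intro x y hxy
    exact hi (congrArg Subtype.val hxy)
  · rintro ⟨e, he⟩ he0
    obtain ⟨a, x, h1, h2⟩ := hE e he (fun h => he0 (Subtype.ext h))
    exact ⟨a, x, Subtype.ext h1, fun h => h2 (congrArg Subtype.val h)⟩

/-- If every mininjective right `R`-module is injective, then every simple
right `R`-module embeds in `R` or in `R/I` for some minimal right ideal `I` of `R`. -/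
theorem simple_embeds_of_mininjective_injective (R : Type u) [Ring R]
    (h : ∀ (M : Type u) [AddCommGroup M] [Module Rᵐᵒᵖ M],
        IsMininjective R M → Module.Injective Rᵐᵒᵖ M)
    (S : Type u) [AddCommGroup S] [Module Rᵐᵒᵖ S] (hS : IsSimpleModule Rᵐᵒᵖ S) :
    (∃ f : S →ₗ[Rᵐᵒᵖ] R, Function.Injective f) ∨
      ∃ I : Submodule Rᵐᵒᵖ R, IsAtom I ∧
        ∃ f : S →ₗ[Rᵐᵒᵖ] (R ⧸ I), Function.Injective f := by
  classical
  by_contra! hcon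
  obtain ⟨hR, hI⟩ := hcon
  have hR0 : ∀ f : S →ₗ[Rᵐᵒᵖ] R, f = 0 := fun f =>
    f.injective_or_eq_zero.resolve_left (hR f)
  have hI0 : ∀ I : Submodule Rᵐᵒᵖ R, IsAtom I → ∀ f : S →ₗ[Rᵐᵒᵖ] (R ⧸ I), f = 0 :=
    fun I hat f => f.injective_or_eq_zero.resolve_left (hI I hat f)
  -- `S` is injective
  have hSinj : Module.Injective Rᵐᵒᵖ S := by
    apply h
    intro I hat f
    have : IsSimpleModule Rᵐᵒᵖ I := isSimpleModule_iff_isAtom.mpr hat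
    rcases eq_or_ne f 0 with rfl | hf
    · exact ⟨0, by simp⟩
    · exfalso
      have hb := LinearMap.bijective_of_ne_zero hf
      let e := LinearEquiv.ofBijective f hb
      exact hR (I.subtype ∘ₗ e.symm.toLinearMap)
        (Subtype.val_injective.comp e.symm.injective)
  let J := {p : (Σ I : Submodule Rᵐᵒᵖ R, ((R ⧸ I) →ₗ[Rᵐᵒᵖ] S)) // IsAtom p.1}
  let D := DirectSum J (fun j => R ⧸ j.1.1)
  obtain ⟨E, _, _, i, hE, hi, hess⟩ := aux_hull Rᵐᵒᵖ (R × D)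
  have := IsSimpleModule.nontrivial Rᵐᵒᵖ S
  obtain ⟨s, hs⟩ := exists_ne (0 : S)
  let φ0 : R →ₗ[Rᵐᵒᵖ] S :=
    { toFun := fun r => op r • s
      map_add' := fun a b => by rw [op_add, add_smul]
      map_smul' := fun a b => by
        rw [RingHom.id_apply, ← mul_smul]; rfl }
  let ψ : D →ₗ[Rᵐᵒᵖ] S := DirectSum.toModule Rᵐᵒᵖ J S (fun j => j.1.2)
  obtain ⟨φ, hφ⟩ := hSinj.out (X := R × D) (Y := E) i hi (φ0.coprod ψ)
  -- no copy of `S` in `E`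
  have hSX : ∀ f : S →ₗ[Rᵐᵒᵖ] (R × D), f = 0 := by
    intro f
    have h1 := hR0 (LinearMap.fst _ _ _ ∘ₗ f)
    have h2 : ∀ j, DirectSum.component Rᵐᵒᵖ J (fun j => R ⧸ j.1.1) j ∘ₗ
        (LinearMap.snd _ _ _ ∘ₗ f) = 0 := fun j => hI0 _ j.2 _
    refine LinearMap.ext fun x => Prod.ext (LinearMap.congr_fun h1 x) ?_
    refine DFinsupp.ext fun j => ?_
    exact LinearMap.congr_fun (h2 j) x
  have hSE : ∀ f : S →ₗ[Rᵐᵒᵖ] E, f = 0 := by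
    intro f
    by_contra hf
    have hfi := LinearMap.injective_of_ne_zero hf
    obtain ⟨a, x, hax, ha0⟩ := hess (f s) (fun h => hs (hfi (h.trans (map_zero f).symm)))
    have hle : LinearMap.range f ≤ LinearMap.range i := by
      have hc : (LinearMap.range i).comap f = ⊤ := by
        refine (eq_bot_or_eq_top _).resolve_left fun hb => ha0 ?_
        have : a • s ∈ (LinearMap.range i).comap f := ⟨x, by rw [map_smul, hax]⟩
        rw [hb, Submodule.mem_bot] at this
        rw [← map_smul, this, map_zero]
      rintro _ ⟨y, rfl⟩
      have : y ∈ (LinearMap.range i).comap f := hc ▸ Submodule.mem_top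
      exact this
    let e := LinearEquiv.ofInjective i hi
    let g : S →ₗ[Rᵐᵒᵖ] (R × D) :=
      e.symm.toLinearMap ∘ₗ f.codRestrict _ (fun y => hle ⟨y, rfl⟩)
    have hg := LinearMap.congr_fun (hSX g) s
    have hg2 : f.codRestrict (LinearMap.range i) (fun y => hle ⟨y, rfl⟩) s = 0 :=
      e.symm.injective (hg.trans (map_zero _).symm)
    exact hs (hfi ((congrArg Subtype.val hg2).trans (map_zero f).symm))
  -- the kernel of `φ` is mininjective
  have hM : IsMininjective R (LinearMap.ker φ) := by
    intro I hat f
    obtain ⟨g, hg⟩ := hE.out I.subtype Subtype.val_injective ((LinearMap.ker φ).subtype ∘ₗ f)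
    have hk : I ≤ LinearMap.ker (φ ∘ₗ g) := by
      intro x hx
      have : g x = f ⟨x, hx⟩ := hg ⟨x, hx⟩
      rw [LinearMap.mem_ker, LinearMap.comp_apply, this]
      exact (f ⟨x, hx⟩).2
    let k : (R ⧸ I) →ₗ[Rᵐᵒᵖ] S := I.liftQ (φ ∘ₗ g) hk
    let j : J := ⟨⟨I, k⟩, hat⟩
    let c : (R ⧸ I) →ₗ[Rᵐᵒᵖ] E := i ∘ₗ LinearMap.inr _ _ _ ∘ₗ
      DirectSum.lof Rᵐᵒᵖ J (fun j => R ⧸ j.1.1) j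
    have hc : ∀ y, φ (c y) = k y := by
      intro y
      have : φ (c y) = _ := hφ _
      rw [this]
      have h5 : ψ (DirectSum.lof Rᵐᵒᵖ J (fun j => R ⧸ j.1.1) j y) = k y :=
        DirectSum.toModule_lof (R := Rᵐᵒᵖ) (φ := fun j : J => j.1.2) j y
      have h6 : φ0 0 + ψ (DirectSum.lof Rᵐᵒᵖ J (fun j => R ⧸ j.1.1) j y) = k y := by
        rw [map_zero, zero_add, h5]
      exact h6
    refine ⟨(g - c ∘ₗ I.mkQ).codRestrict _ ?_, ?_⟩
    · intro r
      rw [LinearMap.mem_ker, LinearMap.sub_apply, map_sub, LinearMap.comp_apply, hc]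
      exact sub_self (φ (g r))
    · intro x
      apply Subtype.ext
      have h1 : I.mkQ (x : R) = 0 := by simp
      rw [LinearMap.codRestrict_apply, LinearMap.sub_apply, LinearMap.comp_apply, h1, map_zero,
        sub_zero]
      exact hg x
  obtain ⟨r, hr⟩ := (h _ hM).out (LinearMap.ker φ).subtype Subtype.val_injective LinearMap.id
  -- so `φ` splits
  have hφs : φ (i (1, 0)) = s := by
    rw [hφ]
    simp [φ0]
  have hsurj : Function.Surjective φ := LinearMap.surjective_of_ne_zero (fun h0 => hs (by
    rw [← hφs, h0, LinearMap.zero_apply]))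
  have hlift : LinearMap.ker φ ≤
      LinearMap.ker (LinearMap.id - (LinearMap.ker φ).subtype ∘ₗ r) := by
    intro x hx
    have : r x = ⟨x, hx⟩ := hr ⟨x, hx⟩
    simp [this]
  let σ : S →ₗ[Rᵐᵒᵖ] E := (LinearMap.ker φ).liftQ _ hlift ∘ₗ
    (φ.quotKerEquivOfSurjective hsurj).symm.toLinearMap
  have hσ : σ (φ (i (1, 0))) = i (1, 0) - r (i (1, 0)) := by
    have : (φ.quotKerEquivOfSurjective hsurj).symm (φ (i (1, 0))) =
        (LinearMap.ker φ).mkQ (i (1, 0)) := by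
      rw [LinearEquiv.symm_apply_eq]; rfl
    simp only [σ, LinearMap.comp_apply, LinearEquiv.coe_coe, this]
    rfl
  rw [hSE σ, LinearMap.zero_apply] at hσ
  have hz : i (1, 0) = r (i (1, 0)) := (sub_eq_zero.mp hσ.symm)
  apply hs
  rw [← hφs, hz]
  exact (r (i (1, 0))).2
end

section
/- Let R be an Artinian serial ring with J(R)² = 0, where J(R) is the Jacobson radical of R. Then every mininjective right R-module is injective. -/
universe u v w v'

open MulOpposite

theorem aux_uniserial_torsion {S : Type*} [Ring S] [IsSemisimpleRing (S ⧸ Ring.jacobson S)]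
    {Q : Type*} [AddCommGroup Q] [Module S Q]
    (hu : ∀ N P : Submodule S Q, N ≤ P ∨ P ≤ N)
    (ht : Module.IsTorsionBySet S Q (Ring.jacobson S)) (N : Submodule S Q) :
    N = ⊥ ∨ N = ⊤ := by
  letI := ht.module
  have hss : IsSemisimpleModule S Q :=
    ht.isSemisimpleModule_iff.mp inferInstance
  obtain ⟨P, hP⟩ := exists_isCompl N
  rcases hu N P with h | h
  · left
    have := hP.inf_eq_bot
    rwa [inf_eq_left.mpr h] at this
  · right
    have := hP.sup_eq_top
    rwa [sup_eq_left.mpr h] at this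

theorem aux_uniserial {S : Type*} [Ring S] [IsSemisimpleRing (S ⧸ Ring.jacobson S)]
    {Q : Type*} [AddCommGroup Q] [Module S Q]
    (hu : ∀ N P : Submodule S Q, N ≤ P ∨ P ≤ N)
    (hsq : ∀ a ∈ Ring.jacobson S, ∀ b ∈ Ring.jacobson S, ∀ q : Q, a • b • q = 0)
    (N : Submodule S Q) (hN : N ≠ ⊤) : N = ⊥ ∨ IsAtom N := by
  have key : N ≤ Ring.jacobson S • (⊤ : Submodule S Q) := by
    rcases hu N (Ring.jacobson S • (⊤ : Submodule S Q)) with h | h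
    · exact h
    · set K := Ring.jacobson S • (⊤ : Submodule S Q) with hK
      have ht : Module.IsTorsionBySet S (Q ⧸ K) (Ring.jacobson S) := by
        intro x a
        obtain ⟨q, rfl⟩ := K.mkQ_surjective x
        change (a : S) • K.mkQ q = 0
        rw [← map_smul]
        exact (Submodule.Quotient.mk_eq_zero K).mpr
          (Submodule.smul_mem_smul a.2 Submodule.mem_top)
      have hu' : ∀ A B : Submodule S (Q ⧸ K), A ≤ B ∨ B ≤ A := by
        intro A B
        rcases hu (A.comap K.mkQ) (B.comap K.mkQ) with h | h
        · exact Or.inl ((Submodule.comap_le_comap_iff_of_surjective K.mkQ_surjective).mp h)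
        · exact Or.inr ((Submodule.comap_le_comap_iff_of_surjective K.mkQ_surjective).mp h)
      have hcm : (N.map K.mkQ).comap K.mkQ = N := by
        rw [Submodule.comap_map_mkQ, sup_eq_right.mpr h]
      rcases aux_uniserial_torsion hu' ht (N.map K.mkQ) with h0 | h0
      · rw [h0] at hcm
        rw [← hcm]
        intro x hx
        simpa using hx
      · rw [h0] at hcm
        exact absurd hcm.symm (by simpa using hN)
  have hkill : ∀ a ∈ Ring.jacobson S, ∀ x ∈ Ring.jacobson S • (⊤ : Submodule S Q),
      a • x = 0 := by
    intro a ha x hx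
    induction hx using Submodule.smul_induction_on' with
    | smul r hr n hn => exact hsq a ha r hr n
    | add x _ y _ hx hy => rw [smul_add, hx, hy, add_zero]
  have htN : Module.IsTorsionBySet S N (Ring.jacobson S) := by
    intro x a
    exact Subtype.ext (hkill a a.2 x (key x.2))
  have huN : ∀ A B : Submodule S N, A ≤ B ∨ B ≤ A := by
    intro A B
    rcases hu (A.map N.subtype) (B.map N.subtype) with h | h
    · exact Or.inl ((Submodule.map_le_map_iff_of_injective N.injective_subtype _ _).mp h)
    · exact Or.inr ((Submodule.map_le_map_iff_of_injective N.injective_subtype _ _).mp h)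
  by_cases h0 : N = ⊥
  · exact Or.inl h0
  · right
    refine ⟨h0, fun P hP => ?_⟩
    rcases aux_uniserial_torsion huN htN (P.comap N.subtype) with h | h
    · rw [eq_bot_iff]
      intro x hx
      have : (⟨x, hP.le hx⟩ : N) ∈ P.comap N.subtype := hx
      rw [h] at this
      simpa using this
    · exact absurd (Submodule.comap_subtype_eq_top.mp h) (not_le_of_gt hP)

theorem aux_jacobson_op {R : Type*} [Ring R] {a : Rᵐᵒᵖ} (ha : a ∈ Ring.jacobson Rᵐᵒᵖ) :
    unop a ∈ (⊥ : TwoSidedIdeal R).jacobson := by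
  have inv : ∀ w : R, op w ∈ Ring.jacobson Rᵐᵒᵖ → ∃ z, (1 + w) * z = 1 := by
    intro w hw
    rw [← Ideal.jacobson_bot, Ideal.mem_jacobson_iff] at hw
    obtain ⟨z, hz⟩ := hw 1
    refine ⟨unop z, ?_⟩
    have h2 := congrArg unop ((Submodule.mem_bot _).mp hz)
    simp at h2
    rw [add_mul, one_mul, add_comm]
    exact sub_eq_zero.mp h2
  rw [TwoSidedIdeal.mem_jacobson_iff]
  intro y
  have hw : op (y * unop a) ∈ Ring.jacobson Rᵐᵒᵖ :=
    Ideal.mul_mem_right (op y) _ ha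
  obtain ⟨z, hz⟩ := inv _ hw
  have hw2 : op (-(y * unop a * z)) ∈ Ring.jacobson Rᵐᵒᵖ := by
    rw [op_neg]
    exact neg_mem (Ideal.mul_mem_left _ (op z) hw)
  obtain ⟨t, ht⟩ := inv _ hw2
  have hz' : 1 + -(y * unop a * z) = z := by
    rw [add_mul, one_mul] at hz
    rw [← hz]; abel
  rw [hz'] at ht
  have htw : t = 1 + y * unop a := by
    calc t = ((1 + y * unop a) * z) * t := by rw [hz, one_mul]
      _ = _ := by rw [mul_assoc, ht, mul_one]
  refine ⟨z, ?_⟩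
  rw [htw, mul_add, mul_one] at ht
  rw [TwoSidedIdeal.mem_bot, mul_assoc, add_comm, ht, sub_self]

/-- `R` as a right module over itself is the left regular module of `Rᵐᵒᵖ`. -/
def auxOpEquiv (R : Type*) [Ring R] : R ≃ₗ[Rᵐᵒᵖ] Rᵐᵒᵖ where
  toFun := op
  invFun := unop
  map_add' _ _ := rfl
  map_smul' _ _ := rfl
  left_inv _ := rfl
  right_inv _ := rfl

theorem mininjective_injective_of_artinian_serial (R : Type u) [Ring R]
    (hartl : IsArtinian R R) (hartr : IsArtinian Rᵐᵒᵖ R)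
    (hserr : RightSerial R) (hserl : LeftSerial R)
    (hJ : JacobsonSquareZero R) :
    ∀ (M : Type u) [AddCommGroup M] [Module Rᵐᵒᵖ M],
        IsMininjective R M → Module.Injective Rᵐᵒᵖ M := by
  intro M _ _ hM
  obtain ⟨n, c, hc, hu⟩ := hserr
  haveI : IsArtinianRing Rᵐᵒᵖ := isArtinian_of_linearEquiv (auxOpEquiv R)
  -- one-step extension
  have step : ∀ (g : R →ₗ.[Rᵐᵒᵖ] M) (i : Fin n), ∃ g', g ≤ g' ∧ c i ≤ g'.domain := by
    intro g i
    by_cases hi : c i ≤ g.domain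
    · exact ⟨g, le_rfl, hi⟩
    have hN := aux_uniserial (S := Rᵐᵒᵖ) (hu i) (by
      intro a ha b hb q
      apply Subtype.ext
      change ((q : R) * unop b) * unop a = 0
      rw [mul_assoc, hJ _ (aux_jacobson_op hb) _ (aux_jacobson_op ha), mul_zero])
      (g.domain.comap (c i).subtype) (fun h => hi (Submodule.comap_subtype_eq_top.mp h))
    have hext : ∃ h : R →ₗ[Rᵐᵒᵖ] M, ∀ (x : R) (hx : x ∈ g.domain), x ∈ c i →
        h x = g ⟨x, hx⟩ := by
      rcases hN with h0 | h0
      · refine ⟨0, fun x hx hxi => ?_⟩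
        have : (⟨x, hxi⟩ : c i) ∈ g.domain.comap (c i).subtype := hx
        rw [h0] at this
        have hx0 : x = 0 := by simpa using this
        subst hx0
        exact (map_zero g.toFun).symm
      · have hat : IsAtom (g.domain ⊓ c i) := by
          have hmap : (g.domain.comap (c i).subtype).map (c i).subtype = g.domain ⊓ c i := by
            rw [Submodule.map_comap_subtype, inf_comm]
          rw [← hmap, ← isSimpleModule_iff_isAtom]
          rw [← isSimpleModule_iff_isAtom] at h0
          let e := Submodule.equivMapOfInjective (c i).subtype (c i).injective_subtype
            (g.domain.comap (c i).subtype)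
          exact IsSimpleModule.congr (N := ↥(g.domain.comap (c i).subtype)) e.symm
        obtain ⟨h, hh⟩ := hM _ hat
          (g.toFun ∘ₗ Submodule.inclusion (inf_le_left : g.domain ⊓ c i ≤ g.domain))
        exact ⟨h, fun x hx hxi => hh ⟨x, hx, hxi⟩⟩
    obtain ⟨h, hh⟩ := hext
    let k : R →ₗ.[Rᵐᵒᵖ] M := ⟨c i, h ∘ₗ (c i).subtype⟩
    have H : ∀ (x : g.domain) (y : k.domain), (x : R) = y → g x = k y := by
      rintro ⟨x, hx⟩ ⟨y, hy⟩ hxy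
      simp only at hxy
      subst hxy
      exact (hh x hx hy).symm
    exact ⟨g.sup k H, LinearPMap.left_le_sup _ _ H, (LinearPMap.right_le_sup _ _ H).1⟩
  have all : ∀ (g : R →ₗ.[Rᵐᵒᵖ] M) (s : Finset (Fin n)),
      ∃ g', g ≤ g' ∧ ∀ i ∈ s, c i ≤ g'.domain := by
    intro g s
    induction s using Finset.induction_on with
    | empty => exact ⟨g, le_rfl, by simp⟩
    | insert i s _ ih =>
      obtain ⟨g1, h1, h1'⟩ := ih
      obtain ⟨g2, h2, h2'⟩ := step g1 i
      refine ⟨g2, h1.trans h2, fun j hj => ?_⟩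
      rcases Finset.mem_insert.mp hj with rfl | hj
      · exact h2'
      · exact (h1' j hj).trans h2.1
  apply Module.Baer.injective
  intro I f
  let I' : Submodule Rᵐᵒᵖ R := Submodule.comap (auxOpEquiv R).toLinearMap I
  let f' : I' →ₗ[Rᵐᵒᵖ] M :=
    f ∘ₗ ((auxOpEquiv R).toLinearMap.restrict (p := I') (q := I) (fun _ hx => hx))
  obtain ⟨g, hg, hgs⟩ := all ⟨I', f'⟩ Finset.univ
  have htop : ∀ x, x ∈ g.domain := by
    have : (⊤ : Submodule Rᵐᵒᵖ R) ≤ g.domain := by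
      rw [← hc.submodule_iSup_eq_top]
      exact iSup_le fun i => hgs i (Finset.mem_univ i)
    exact fun x => this trivial
  refine ⟨(g.toFun ∘ₗ LinearMap.id.codRestrict g.domain htop) ∘ₗ
    (auxOpEquiv R).symm.toLinearMap, fun x hx => ?_⟩
  exact (hg.2 (x := ⟨unop x, hx⟩) (y := ⟨unop x, htop _⟩) rfl).symm
end
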